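/- arXiv:1802.01728 — 3 statements merged into one kernel-verified Lean document; each statement's English description precedes it below -/
import Mathlib

section
/- Let w be a non-increasing positive function on I=(0,a), 0<a≤∞, with W(t)=∫₀ᵗ w dm finite on I, and let f be measurable on I such that f*/w belongs to L₁+L∞ with respect to the measure ω=w·dm (i.e. ∫₀ˣ (f*/w)^{*,w} dm < ∞ for every x). Then the Halperin level function f⁰ of f with respect to w satisfies, for every λ > 0, ∫_I (f⁰ − λw)₊ dm ≤ ∫_I (f* − λw)₊ dm; consequently ∫₀ˣ (f⁰/w)^{*,w} dm ≤ ∫₀ˣ (f*/w)^{*,w} dm for every x ∈ (0, W(a)). -/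
open MeasureTheory Set Filter
open scoped ENNReal

/-- The interval `(0, a)` for `a : ℝ≥0∞` (equals `(0,∞)` when `a = ∞`). -/
def Iset (a : ℝ≥0∞) : Set ℝ := {x : ℝ | 0 < x ∧ ENNReal.ofReal x < a}

/-- Lebesgue measure restricted to the interval `(0,a)`. -/
noncomputable def volI (a : ℝ≥0∞) : Measure ℝ := volume.restrict (Iset a)

/-- Decreasing rearrangement of an `ℝ≥0∞`-valued function with respect to a measure `μ`:
`f^{*,μ}(t) = inf {s > 0 : μ({f > s}) ≤ t}`. -/
noncomputable def rearrE (μ : Measure ℝ) (f : ℝ → ℝ≥0∞) (t : ℝ) : ℝ≥0∞ :=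
  sInf {s : ℝ≥0∞ | 0 < s ∧ μ {x | s < f x} ≤ ENNReal.ofReal t}

/-- Decreasing rearrangement of a real function with respect to a measure `μ` on `ℝ`:
`f^{*,μ}(t) = inf {s > 0 : μ({|f| > s}) ≤ t}`. -/
noncomputable def rearr (μ : Measure ℝ) (f : ℝ → ℝ) (t : ℝ) : ℝ≥0∞ :=
  rearrE μ (fun x => ENNReal.ofReal |f x|) t

/-- The measure `w·dm` on the set `I`. -/
noncomputable def wMeas (I : Set ℝ) (w : ℝ → ℝ) : Measure ℝ :=
  (volume.restrict I).withDensity (fun t => ENNReal.ofReal (w t))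

/-- `W(t) = ∫₀ᵗ w dm`. -/
noncomputable def Wfun (w : ℝ → ℝ) (t : ℝ) : ℝ := ∫ s in Set.Ioo (0:ℝ) t, w s

/-- `b = ∫_I w dm` as an extended real number. -/
noncomputable def bval (a : ℝ≥0∞) (w : ℝ → ℝ) : ℝ≥0∞ := ∫⁻ x in Iset a, ENNReal.ofReal (w x)

open scoped Classical

/-- Halperin's ratio `R(α,β) = (∫_α^β g dm)/(∫_α^β w dm)` for finite `β`. -/
noncomputable def Rq (w : ℝ → ℝ) (g : ℝ → ℝ≥0∞) (α β : ℝ) : ℝ≥0∞ :=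
  (∫⁻ t in Set.Ioo α β, g t) / (∫⁻ t in Set.Ioo α β, ENNReal.ofReal (w t))

/-- Halperin's ratio `R(α,β)` for `β ∈ (0,∞]`, with `R(α,∞) = limsup_{t→∞} R(α,t)`. -/
noncomputable def RR (w : ℝ → ℝ) (g : ℝ → ℝ≥0∞) (α : ℝ) (β : ℝ≥0∞) : ℝ≥0∞ :=
  if β = ∞ then Filter.limsup (fun t => Rq w g α t) Filter.atTop else Rq w g α β.toReal

/-- `(α,β) ⊆ (0,a)` is a level interval of `g` with respect to `w`:
`0 < R(α,β)` and `R(α,t) ≤ R(α,β)` for all `t ∈ (α,β)`. -/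
def IsLevelInterval (a : ℝ≥0∞) (w : ℝ → ℝ) (g : ℝ → ℝ≥0∞) (α : ℝ) (β : ℝ≥0∞) : Prop :=
  0 ≤ α ∧ ENNReal.ofReal α < β ∧ β ≤ a ∧ 0 < RR w g α β ∧
    ∀ t : ℝ, α < t → ENNReal.ofReal t < β → Rq w g α t ≤ RR w g α β

/-- A maximal level interval: a level interval contained in no strictly larger one. -/
def IsMaxLevelInterval (a : ℝ≥0∞) (w : ℝ → ℝ) (g : ℝ → ℝ≥0∞) (α : ℝ) (β : ℝ≥0∞) : Prop :=
  IsLevelInterval a w g α β ∧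
    ∀ α' β', IsLevelInterval a w g α' β' → α' ≤ α → β ≤ β' → α' = α ∧ β' = β

/-- Halperin's level function of (the non-negative, decreasing) `g` with respect to `w`:
equal to `R(α,β)·w(t)` on each maximal level interval `(α,β)` and to `g(t)` elsewhere. -/
noncomputable def levelFun (a : ℝ≥0∞) (w : ℝ → ℝ) (g : ℝ → ℝ≥0∞) (t : ℝ) : ℝ≥0∞ :=
  if h : ∃ α β, IsMaxLevelInterval a w g α β ∧ α < t ∧ ENNReal.ofReal t < β then
    RR w g h.choose h.choose_spec.choose * ENNReal.ofReal (w t)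
  else g t

/-!
If two level intervals overlap, the mediant inequality shows that their union is again a level
interval. Hence maximal level intervals are disjoint, so there are countably many of them. On each
one `f⁰ = R w`, and `∫ (R w - λ w)₊ = (R - λ)₊ W = (F - λ W)₊ ≤ ∫ (f - λ w)₊`; off their union
`f⁰ = f`. Summing gives the first inequality. The second one follows from
`∫₀ˣ k^{*,ω} dm = min_λ (∫ (k - λ)₊ dω + λ x)`, applied with `k = f⁰ / w` and `k = f / w`.
-/

/-- The interval `(α, β)` with extended right endpoint `β`; `Iset a` is `extIoo 0 a`. -/
def extIoo (α : ℝ) (β : ℝ≥0∞) : Set ℝ := {t | α < t ∧ ENNReal.ofReal t < β}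

theorem isOpen_extIoo (α : ℝ) (β : ℝ≥0∞) : IsOpen (extIoo α β) :=
  isOpen_Ioi.inter (isOpen_Iio.preimage ENNReal.continuous_ofReal)

theorem measurableSet_extIoo (α : ℝ) (β : ℝ≥0∞) : MeasurableSet (extIoo α β) :=
  (isOpen_extIoo α β).measurableSet

theorem measurableSet_Iset (a : ℝ≥0∞) : MeasurableSet (Iset a) :=
  measurableSet_extIoo 0 a

theorem mem_Iset_of_le {a : ℝ≥0∞} {s t : ℝ} (hs : 0 < s) (hst : s ≤ t) (ht : t ∈ Iset a) :
    s ∈ Iset a :=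
  ⟨hs, (ENNReal.ofReal_le_ofReal hst).trans_lt ht.2⟩

theorem extIoo_top (α : ℝ) : extIoo α ∞ = Ioi α := by
  ext t
  simp [extIoo]

theorem extIoo_of_ne_top {α : ℝ} {β : ℝ≥0∞} (hα : 0 ≤ α) (hβ : β ≠ ∞) :
    extIoo α β = Ioo α β.toReal :=
  Set.ext fun _ => and_congr_right fun ht => ENNReal.ofReal_lt_iff_lt_toReal (hα.trans ht.le) hβ

theorem nonempty_extIoo {α : ℝ} {β : ℝ≥0∞} (hα : 0 ≤ α) (hαβ : ENNReal.ofReal α < β) :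
    (extIoo α β).Nonempty := by
  obtain ⟨c, hαc, hcβ⟩ := exists_between hαβ
  refine ⟨c.toReal, (ENNReal.ofReal_lt_iff_lt_toReal hα hcβ.ne_top).1 hαc, ?_⟩
  rwa [ENNReal.ofReal_toReal hcβ.ne_top]

theorem volume_restrict_Ioi_setOf_ofReal_lt (c : ℝ≥0∞) :
    volume.restrict (Ioi 0) {t : ℝ | ENNReal.ofReal t < c} = c := by
  have hinter : {t | ENNReal.ofReal t < c} ∩ Ioi 0 = extIoo 0 c := inter_comm _ _
  rw [Measure.restrict_apply' measurableSet_Ioi, hinter]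
  rcases eq_or_ne c ∞ with rfl | hc
  · rw [extIoo_top, Real.volume_Ioi]
  · rw [extIoo_of_ne_top le_rfl hc, Real.volume_Ioo, sub_zero, ENNReal.ofReal_toReal hc]

section Rearrangement

theorem lintegral_eq_lintegral_meas_ofReal_lt {α : Type*} [MeasurableSpace α] (μ : Measure α)
    [SFinite μ] {k : α → ℝ≥0∞} (hk : Measurable k) :
    ∫⁻ x, k x ∂μ = ∫⁻ s in Ioi (0 : ℝ), μ {x | ENNReal.ofReal s < k x} := by
  have hS : MeasurableSet {p : α × ℝ | ENNReal.ofReal p.2 < k p.1} :=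
    measurableSet_lt (ENNReal.measurable_ofReal.comp measurable_snd) (hk.comp measurable_fst)
  calc ∫⁻ x, k x ∂μ
      = ∫⁻ x, volume.restrict (Ioi 0) {s : ℝ | ENNReal.ofReal s < k x} ∂μ := by
        simp only [volume_restrict_Ioi_setOf_ofReal_lt]
    _ = (μ.prod (volume.restrict (Ioi 0))) {p | ENNReal.ofReal p.2 < k p.1} :=
        (Measure.prod_apply hS).symm
    _ = ∫⁻ s in Ioi (0 : ℝ), μ {x | ENNReal.ofReal s < k x} := Measure.prod_apply_symm hS

variable (μ : Measure ℝ) (k : ℝ → ℝ≥0∞)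

theorem antitone_rearrE : Antitone (rearrE μ k) := fun _ _ hst =>
  sInf_le_sInf fun _ hu => ⟨hu.1, hu.2.trans (ENNReal.ofReal_le_ofReal hst)⟩

variable {μ k} in
theorem rearrE_le_iff {t : ℝ} {s : ℝ≥0∞} :
    rearrE μ k t ≤ s ↔ μ {x | s < k x} ≤ ENNReal.ofReal t := by
  constructor
  · intro h
    rcases eq_top_or_lt_top s with rfl | hs
    · simp
    obtain ⟨u, hu, hu_mem, hu_lim⟩ := exists_seq_strictAnti_tendsto' hs
    have hUnion : {x | s < k x} = ⋃ n, {x | u n < k x} := by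
      ext x
      rw [mem_iUnion]
      exact ⟨fun hx => (hu_lim.eventually (gt_mem_nhds hx)).exists,
        fun ⟨n, hn⟩ => (hu_mem n).1.trans hn⟩
    have hmono : Monotone fun n => {x | u n < k x} :=
      fun m n hmn x hx => (hu.antitone hmn).trans_lt hx
    rw [hUnion, hmono.measure_iUnion]
    refine iSup_le fun n => ?_
    obtain ⟨v, ⟨-, hv⟩, hvu⟩ := sInf_lt_iff.1 (h.trans_lt (hu_mem n).1)
    exact (measure_mono fun x hx => hvu.trans hx).trans hv
  · exact fun h => le_of_forall_gt_imp_ge_of_dense fun u hu =>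
      sInf_le ⟨pos_of_gt hu, (measure_mono fun x hx => hu.trans hx).trans h⟩

variable [SFinite μ] {k}

theorem lintegral_rearrE_tsub (hk : Measurable k) (l : ℝ≥0∞) :
    ∫⁻ t in Ioi (0 : ℝ), (rearrE μ k t - l) = ∫⁻ x, (k x - l) ∂μ := by
  rw [lintegral_eq_lintegral_meas_ofReal_lt _ ((antitone_rearrE μ k).measurable.sub_const l),
    lintegral_eq_lintegral_meas_ofReal_lt _ (hk.sub_const l)]
  simp only [lt_tsub_iff_right, lt_iff_not_ge (b := rearrE _ _ _), rearrE_le_iff]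
  simp only [not_le, volume_restrict_Ioi_setOf_ofReal_lt]

theorem setLIntegral_rearrE_le (hk : Measurable k) (x : ℝ) (l : ℝ≥0∞) :
    ∫⁻ t in Ioo 0 x, rearrE μ k t ≤ (∫⁻ y, (k y - l) ∂μ) + l * ENNReal.ofReal x :=
  calc ∫⁻ t in Ioo 0 x, rearrE μ k t
      ≤ ∫⁻ t in Ioo 0 x, ((rearrE μ k t - l) + l) := lintegral_mono fun _ => le_tsub_add
    _ = (∫⁻ t in Ioo 0 x, (rearrE μ k t - l)) + l * ENNReal.ofReal x := by
        simp [lintegral_add_right]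
    _ ≤ (∫⁻ y, (k y - l) ∂μ) + l * ENNReal.ofReal x := by
        rw [← lintegral_rearrE_tsub μ hk]
        gcongr
        exact Ioo_subset_Ioi_self

theorem setLIntegral_rearrE_eq (hk : Measurable k) (x : ℝ) :
    ∫⁻ t in Ioo 0 x, rearrE μ k t
      = (∫⁻ y, (k y - rearrE μ k x) ∂μ) + rearrE μ k x * ENNReal.ofReal x := by
  refine (setLIntegral_rearrE_le μ hk x _).antisymm ?_
  set l := rearrE μ k x
  have tail_eq_zero : ∫⁻ t in Ici x, (rearrE μ k t - l) = 0 :=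
    (setLIntegral_congr_fun measurableSet_Ici fun t ht =>
      tsub_eq_zero_of_le (antitone_rearrE μ k ht)).trans (by simp)
  have hcover : Ioi 0 ⊆ Ioo 0 x ∪ Ici x := fun t ht => (lt_or_ge t x).imp (⟨ht, ·⟩) id
  calc (∫⁻ y, (k y - l) ∂μ) + l * ENNReal.ofReal x
      = (∫⁻ t in Ioi 0, (rearrE μ k t - l)) + l * ENNReal.ofReal x := by
        rw [lintegral_rearrE_tsub μ hk]
    _ ≤ (∫⁻ t in Ioo 0 x, (rearrE μ k t - l)) + l * ENNReal.ofReal x := by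
        gcongr ?_ + _
        refine (lintegral_mono_set hcover).trans ((lintegral_union_le _ _ _).trans_eq ?_)
        rw [tail_eq_zero, add_zero]
    _ = ∫⁻ t in Ioo 0 x, ((rearrE μ k t - l) + l) := by simp [lintegral_add_right]
    _ = ∫⁻ t in Ioo 0 x, rearrE μ k t :=
        setLIntegral_congr_fun measurableSet_Ioo fun t ht =>
          tsub_add_cancel_of_le (antitone_rearrE μ k ht.2.le)

theorem setLIntegral_rearrE_mono_of_tsub {h : ℝ → ℝ≥0∞} (hh : Measurable h) (hk : Measurable k)
    (hle : ∀ l, ∫⁻ x, (h x - l) ∂μ ≤ ∫⁻ x, (k x - l) ∂μ) (x : ℝ) :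
    ∫⁻ t in Ioo 0 x, rearrE μ h t ≤ ∫⁻ t in Ioo 0 x, rearrE μ k t := by
  rw [setLIntegral_rearrE_eq μ hk]
  exact (setLIntegral_rearrE_le μ hh x (rearrE μ k x)).trans (add_le_add_left (hle _) _)

theorem exists_lintegral_tsub_ne_top (hk : Measurable k) {x : ℝ} (hx : 0 < x)
    (hfin : ∫⁻ t in Ioo 0 x, rearrE μ k t ≠ ∞) : ∃ l ≠ ∞, ∫⁻ y, (k y - l) ∂μ ≠ ∞ := by
  rw [setLIntegral_rearrE_eq μ hk, ENNReal.add_ne_top] at hfin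
  refine ⟨rearrE μ k x, fun htop => hfin.2 ?_, hfin.1⟩
  rw [htop, ENNReal.top_mul (ENNReal.ofReal_pos.2 hx).ne']

end Rearrangement

section CountableCover

variable {α β ι : Type*} [MeasurableSpace α] {s : Set ι} {J : ι → Set α}

theorem measurable_of_eqOn_biUnion [MeasurableSpace β] {f g : α → β} {F : ι → α → β}
    (hs : s.Countable) (hJ : ∀ i ∈ s, MeasurableSet (J i)) (hF : ∀ i ∈ s, Measurable (F i))
    (hg : Measurable g) (hfF : ∀ i ∈ s, EqOn f (F i) (J i)) (hfg : EqOn f g (⋃ i ∈ s, J i)ᶜ) :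
    Measurable f := by
  intro S hS
  have hpreimage : f ⁻¹' S = (⋃ i ∈ s, J i ∩ f ⁻¹' S) ∪ ((⋃ i ∈ s, J i)ᶜ ∩ f ⁻¹' S) := by
    rw [← iUnion₂_inter, ← union_inter_distrib_right, union_compl_self, univ_inter]
  rw [hpreimage, hfg.inter_preimage_eq]
  refine (MeasurableSet.biUnion hs fun i hi => ?_).union
    ((MeasurableSet.biUnion hs hJ).compl.inter (hg hS))
  rw [(hfF i hi).inter_preimage_eq]
  exact (hJ i hi).inter (hF i hi hS)

theorem setLIntegral_le_of_biUnion {μ : Measure α} {A : Set α} {f g : α → ℝ≥0∞}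
    (hs : s.Countable) (hA : MeasurableSet A) (hJ : ∀ i ∈ s, MeasurableSet (J i))
    (hJA : ∀ i ∈ s, J i ⊆ A) (hdisj : s.PairwiseDisjoint J)
    (hle : ∀ i ∈ s, ∫⁻ x in J i, f x ∂μ ≤ ∫⁻ x in J i, g x ∂μ)
    (hoff : ∀ x ∈ A \ ⋃ i ∈ s, J i, f x ≤ g x) : ∫⁻ x in A, f x ∂μ ≤ ∫⁻ x in A, g x ∂μ := by
  have hU : MeasurableSet (⋃ i ∈ s, J i) := MeasurableSet.biUnion hs hJ
  rw [← lintegral_inter_add_sdiff f A hU, ← lintegral_inter_add_sdiff g A hU,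
    inter_eq_right.2 (iUnion₂_subset hJA), lintegral_biUnion hs hJ hdisj,
    lintegral_biUnion hs hJ hdisj]
  exact add_le_add (ENNReal.tsum_le_tsum fun i => hle i i.2)
    (setLIntegral_mono' (hA.diff hU) hoff)

end CountableCover

/-- The mass `∫_α^β h dm`: the paper's `F(α, β)` for `h = f`, and `W(α, β)` for `h = w`. -/
noncomputable def massIoo (h : ℝ → ℝ≥0∞) (α β : ℝ) : ℝ≥0∞ := ∫⁻ t in Ioo α β, h t

theorem massIoo_add (h : ℝ → ℝ≥0∞) {α β γ : ℝ} (hαβ : α ≤ β) (hβγ : β ≤ γ) :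
    massIoo h α β + massIoo h β γ = massIoo h α γ := by
  simp only [massIoo, setLIntegral_congr (Ioo_ae_eq_Ioc (μ := volume))]
  rw [← lintegral_union measurableSet_Ioc (Ioc_disjoint_Ioc_of_le le_rfl),
    Ioc_union_Ioc_eq_Ioc hαβ hβγ]

theorem massIoo_mono (h : ℝ → ℝ≥0∞) {α α' β β' : ℝ} (hα : α' ≤ α) (hβ : β ≤ β') :
    massIoo h α β ≤ massIoo h α' β' :=
  lintegral_mono_set (Ioo_subset_Ioo hα hβ)

section Quotient

variable {F₁ F₂ W₁ W₂ : ℝ≥0∞}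

theorem div_le_div_of_div_le_mediant (hF₁ : F₁ ≠ ∞) (hW₁ : W₁ ≠ 0) (hW₁' : W₁ ≠ ∞)
    (hW₂ : W₂ ≠ 0) (hW₂' : W₂ ≠ ∞) (h : F₁ / W₁ ≤ (F₁ + F₂) / (W₁ + W₂)) :
    (F₁ + F₂) / (W₁ + W₂) ≤ F₂ / W₂ := by
  rcases eq_or_ne F₂ ∞ with rfl | hF₂
  · simp [ENNReal.top_div_of_ne_top hW₂']
  set r := (F₁ + F₂) / (W₁ + W₂) with hr
  have hW : W₁ + W₂ ≠ 0 := by simp [hW₁]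
  have hr_top : r ≠ ∞ := ENNReal.div_ne_top (ENNReal.add_ne_top.2 ⟨hF₁, hF₂⟩) hW
  rw [ENNReal.le_div_iff_mul_le (.inl hW₂) (.inl hW₂')]
  refine ENNReal.le_of_add_le_add_left (ENNReal.mul_ne_top hr_top hW₁') ?_
  calc r * W₁ + r * W₂ = F₁ + F₂ := by
        rw [← mul_add, hr, ENNReal.div_mul_cancel hW (ENNReal.add_ne_top.2 ⟨hW₁', hW₂'⟩)]
    _ ≤ r * W₁ + F₂ := by
        gcongr
        exact (ENNReal.div_le_iff hW₁ hW₁').1 h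

theorem div_le_add_of_mediant_le {q : ℝ≥0∞} (hF₁ : F₁ ≠ ∞) (hW₁ : W₁ ≠ 0) (hW₁' : W₁ ≠ ∞)
    (h : (F₁ + F₂) / (W₁ + W₂) ≤ q) : F₂ / W₂ ≤ q + (q * W₁ - F₁) / W₂ := by
  rcases eq_or_ne W₂ ∞ with rfl | hW₂
  · simp
  rw [ENNReal.div_le_iff (by simp [hW₁]) (ENNReal.add_ne_top.2 ⟨hW₁', hW₂⟩)] at h
  have hF₂ : F₂ ≤ q * W₂ + (q * W₁ - F₁) :=
    calc F₂ ≤ q * (W₁ + W₂) - F₁ := ENNReal.le_sub_of_add_le_left hF₁ h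
      _ = q * W₂ + q * W₁ - F₁ := by rw [add_comm W₁, mul_add]
      _ ≤ q * W₂ + (q * W₁ - F₁) := add_tsub_le_assoc
  calc F₂ / W₂ ≤ q * W₂ / W₂ + (q * W₁ - F₁) / W₂ := by
        rw [← ENNReal.add_div]
        gcongr
    _ ≤ q + (q * W₁ - F₁) / W₂ := by
        gcongr
        exact ENNReal.div_le_of_le_mul le_rfl

theorem mediant_le_of_div_le {q r : ℝ≥0∞} (hW₁ : W₁ ≠ 0) (hW₁' : W₁ ≠ ∞) (hW₂ : W₂ ≠ 0)
    (hW₂' : W₂ ≠ ∞) (h₁ : F₁ / W₁ ≤ r) (h₂ : F₂ / W₂ ≤ r) (hr : r ≤ q + (q * W₁ - F₁) / W₂) :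
    (F₁ + F₂) / (W₁ + W₂) ≤ q := by
  have hF₁ : F₁ ≤ q * W₁ := by
    by_contra! hlt
    rw [tsub_eq_zero_of_le hlt.le, ENNReal.zero_div, add_zero] at hr
    exact hlt.not_ge ((ENNReal.div_le_iff hW₁ hW₁').1 (h₁.trans hr))
  refine ENNReal.div_le_of_le_mul ?_
  calc F₁ + F₂ ≤ F₁ + (q + (q * W₁ - F₁) / W₂) * W₂ := by
        gcongr
        exact (ENNReal.div_le_iff hW₂ hW₂').1 (h₂.trans hr)
    _ = F₁ + (q * W₁ - F₁) + q * W₂ := by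
        rw [add_mul, ENNReal.div_mul_cancel hW₂ hW₂', add_assoc, add_comm (q * W₂)]
    _ = q * (W₁ + W₂) := by rw [add_tsub_cancel_of_le hF₁, mul_add]

end Quotient

theorem Rq_eq_mediant (w : ℝ → ℝ) (g : ℝ → ℝ≥0∞) {α β γ : ℝ} (hαβ : α ≤ β) (hβγ : β ≤ γ) :
    Rq w g α γ = (massIoo g α β + massIoo g β γ) /
      (massIoo (ENNReal.ofReal ∘ w) α β + massIoo (ENNReal.ofReal ∘ w) β γ) := by
  rw [massIoo_add g hαβ hβγ, massIoo_add _ hαβ hβγ]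
  rfl

/-- The maximal level intervals `(α, β)` of `g` with respect to `w`, as pairs of endpoints. -/
def maxLevelIntervals (a : ℝ≥0∞) (w : ℝ → ℝ) (g : ℝ → ℝ≥0∞) : Set (ℝ × ℝ≥0∞) :=
  {p | IsMaxLevelInterval a w g p.1 p.2}

theorem levelFun_of_notMem {a : ℝ≥0∞} {w : ℝ → ℝ} {g : ℝ → ℝ≥0∞} {t : ℝ}
    (ht : t ∉ ⋃ p ∈ maxLevelIntervals a w g, extIoo p.1 p.2) : levelFun a w g t = g t :=
  dif_neg fun ⟨α, β, hmax, hmem⟩ => ht (mem_biUnion (x := (α, β)) hmax hmem)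

/-- The standing assumptions under which level intervals are well behaved: `w` is a positive
measurable weight on `(0, a)`, and `W(0, t)` and `F(0, t)` are finite for `t ∈ (0, a)`. -/
structure LevelAdmissible (a : ℝ≥0∞) (w : ℝ → ℝ) (g : ℝ → ℝ≥0∞) : Prop where
  weight_pos : ∀ t ∈ Iset a, 0 < w t
  weight_measurable : Measurable w
  weight_ne_top : ∀ t ∈ Iset a, massIoo (ENNReal.ofReal ∘ w) 0 t ≠ ∞
  ne_top : ∀ t ∈ Iset a, massIoo g 0 t ≠ ∞

theorem RR_le_of_Rq_le {w : ℝ → ℝ} {g : ℝ → ℝ≥0∞} {α₁ α₂ t : ℝ} {β q c : ℝ≥0∞}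
    (hq : RR w g α₁ β < q) (ht : 0 ≤ t) (htβ : ENNReal.ofReal t < β)
    (h : ∀ s, t ≤ s → Rq w g α₁ s ≤ q → Rq w g α₂ s ≤ c) : RR w g α₂ β ≤ c := by
  unfold RR at hq ⊢
  split_ifs at hq ⊢ with hβ
  · refine limsup_le_of_le (by isBoundedDefault) ?_
    filter_upwards [eventually_lt_of_limsup_lt hq, eventually_ge_atTop t] with s hs hts
    exact h s hts hs.le
  · exact h _ ((ENNReal.ofReal_lt_iff_lt_toReal ht hβ).1 htβ).le hq.le

namespace LevelAdmissible

variable {a : ℝ≥0∞} {w : ℝ → ℝ} {g : ℝ → ℝ≥0∞} {α β γ : ℝ}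

theorem weight_massIoo_ne_top (H : LevelAdmissible a w g) (hα : 0 ≤ α) (hβ : β ∈ Iset a) :
    massIoo (ENNReal.ofReal ∘ w) α β ≠ ∞ :=
  ne_top_of_le_ne_top (H.weight_ne_top β hβ) (massIoo_mono _ hα le_rfl)

theorem massIoo_ne_top (H : LevelAdmissible a w g) (hα : 0 ≤ α) (hβ : β ∈ Iset a) :
    massIoo g α β ≠ ∞ :=
  ne_top_of_le_ne_top (H.ne_top β hβ) (massIoo_mono _ hα le_rfl)

theorem weight_massIoo_ne_zero (H : LevelAdmissible a w g) (hα : 0 ≤ α) (hαβ : α < β)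
    (hβ : β ∈ Iset a) : massIoo (ENNReal.ofReal ∘ w) α β ≠ 0 := by
  have hsupp : Ioo α β ⊆ Function.support (ENNReal.ofReal ∘ w) := fun t ht =>
    (ENNReal.ofReal_pos.2 (H.weight_pos t
      (mem_Iset_of_le (hα.trans_lt ht.1) ht.2.le hβ))).ne'
  rw [massIoo, ← pos_iff_ne_zero,
    setLIntegral_pos_iff (ENNReal.measurable_ofReal.comp H.weight_measurable),
    inter_eq_right.2 hsupp, Real.volume_Ioo]
  exact ENNReal.ofReal_pos.2 (sub_pos.2 hαβ)

theorem Rq_le_Rq_right (H : LevelAdmissible a w g) (hα : 0 ≤ α) (hαβ : α < β) (hβγ : β < γ)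
    (hγ : γ ∈ Iset a) (h : Rq w g α β ≤ Rq w g α γ) : Rq w g α γ ≤ Rq w g β γ := by
  have hβ : β ∈ Iset a := mem_Iset_of_le (hα.trans_lt hαβ) hβγ.le hγ
  rw [Rq_eq_mediant w g hαβ.le hβγ.le] at h ⊢
  exact div_le_div_of_div_le_mediant (H.massIoo_ne_top hα hβ)
    (H.weight_massIoo_ne_zero hα hαβ hβ) (H.weight_massIoo_ne_top hα hβ)
    (H.weight_massIoo_ne_zero hβ.1.le hβγ hγ) (H.weight_massIoo_ne_top hβ.1.le hγ) h

theorem Rq_le_RR_of_left_le (H : LevelAdmissible a w g) {t : ℝ} {b : ℝ≥0∞} (hα : 0 ≤ α)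
    (hαβ : α < β) (hβt : β < t) (htb : ENNReal.ofReal t < b) (hb : b ≤ a)
    (hleft : Rq w g α β ≤ RR w g β b) (hright : Rq w g β t ≤ RR w g β b) :
    Rq w g α t ≤ RR w g α b := by
  have ht : t ∈ Iset a := ⟨hα.trans_lt (hαβ.trans hβt), htb.trans_le hb⟩
  have hβ : β ∈ Iset a := mem_Iset_of_le (hα.trans_lt hαβ) hβt.le ht
  have hW := H.weight_massIoo_ne_zero hα hαβ hβ
  have hW' := H.weight_massIoo_ne_top hα hβ
  -- For `b = ∞` the right side is a limsup, so it is used only through its upper bounds `q`: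
  -- from `t` on, `R(α, s) ≤ q` bounds `R(β, s)` uniformly.
  refine le_of_forall_gt_imp_ge_of_dense fun q hq => ?_
  rw [Rq_eq_mediant w g hαβ.le hβt.le]
  refine mediant_le_of_div_le hW hW' (H.weight_massIoo_ne_zero hβ.1.le hβt ht)
    (H.weight_massIoo_ne_top hβ.1.le ht) hleft hright ?_
  refine RR_le_of_Rq_le hq ht.1.le htb fun s hts hs => ?_
  rw [Rq_eq_mediant w g hαβ.le (hβt.le.trans hts)] at hs
  refine (div_le_add_of_mediant_le (H.massIoo_ne_top hα hβ) hW hW' hs).trans ?_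
  gcongr
  exact massIoo_mono _ le_rfl hts

theorem isLevelInterval_union (H : LevelAdmissible a w g) {α₁ α₂ : ℝ} {β₁ β₂ : ℝ≥0∞}
    (h₁ : IsLevelInterval a w g α₁ β₁) (h₂ : IsLevelInterval a w g α₂ β₂) (hα : α₁ < α₂)
    (hαβ : ENNReal.ofReal α₂ < β₁) (hβ : β₁ < β₂) : IsLevelInterval a w g α₁ β₂ := by
  obtain ⟨hα₁, hαβ₁, hβ₁a, hpos, hle₁⟩ := h₁
  obtain ⟨hα₂, -, hβ₂a, -, hle₂⟩ := h₂
  lift β₁ to NNReal using hβ.ne_top with b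
  have hb_coe : ENNReal.ofReal b = b := ENNReal.ofReal_coe_nnreal
  have hα₂b : α₂ < b := (ENNReal.ofReal_lt_iff_lt_toReal hα₂ ENNReal.coe_ne_top).1 hαβ
  have hb : (b : ℝ) ∈ Iset a := ⟨hα₂.trans_lt hα₂b, hb_coe.trans_lt (hβ.trans_le hβ₂a)⟩
  have hbβ₂ : ENNReal.ofReal b < β₂ := hb_coe.trans_lt hβ
  rw [show RR w g α₁ b = Rq w g α₁ b by simp [RR]] at hpos hle₁
  have hleft_le : Rq w g α₁ α₂ ≤ RR w g α₂ β₂ :=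
    calc Rq w g α₁ α₂ ≤ Rq w g α₁ b := hle₁ α₂ hα hαβ
      _ ≤ Rq w g α₂ b := H.Rq_le_Rq_right hα₁ hα hα₂b hb (hle₁ α₂ hα hαβ)
      _ ≤ RR w g α₂ β₂ := hle₂ b hα₂b hbβ₂
  have hle_right : ∀ t, α₂ < t → ENNReal.ofReal t < β₂ → Rq w g α₁ t ≤ RR w g α₁ β₂ :=
    fun t ht htβ => H.Rq_le_RR_of_left_le hα₁ hα ht htβ hβ₂a hleft_le (hle₂ t ht htβ)
  have hb_le : Rq w g α₁ b ≤ RR w g α₁ β₂ := hle_right b hα₂b hbβ₂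
  refine ⟨hα₁, hαβ₁.trans hβ, hβ₂a, hpos.trans_le hb_le, fun t ht htβ => ?_⟩
  rcases le_or_gt t α₂ with htα | htα
  · exact (hle₁ t ht ((ENNReal.ofReal_le_ofReal htα).trans_lt hαβ)).trans hb_le
  · exact hle_right t htα htβ

theorem pairwiseDisjoint_maxLevelIntervals (H : LevelAdmissible a w g) :
    (maxLevelIntervals a w g).PairwiseDisjoint fun p => extIoo p.1 p.2 := by
  intro p hp q hq
  contrapose!
  intro hpq
  obtain ⟨t, htp, htq⟩ := not_disjoint_iff.1 hpq
  wlog hle : p.1 ≤ q.1 generalizing p q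
  · exact (this hq hp (fun h => hpq (Disjoint.symm h)) htq htp (not_le.1 hle).le).symm
  rcases le_or_gt q.2 p.2 with hqp | hqp
  · obtain ⟨h₁, h₂⟩ := hq.2 _ _ hp.1 hle hqp
    exact Prod.ext h₁ h₂
  rcases hle.eq_or_lt with heq | hlt
  · obtain ⟨h₁, h₂⟩ := hp.2 _ _ hq.1 heq.ge hqp.le
    exact Prod.ext h₁.symm h₂.symm
  · have hunion := H.isLevelInterval_union hp.1 hq.1 hlt
      ((ENNReal.ofReal_le_ofReal htq.1.le).trans_lt htp.2) hqp
    exact absurd (hp.2 _ _ hunion le_rfl hqp.le).2 hqp.ne'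

theorem countable_maxLevelIntervals (H : LevelAdmissible a w g) :
    (maxLevelIntervals a w g).Countable :=
  H.pairwiseDisjoint_maxLevelIntervals.countable_of_isOpen (fun _ _ => isOpen_extIoo _ _)
    fun _ hp => nonempty_extIoo hp.1.1 hp.1.2.1

theorem levelFun_of_mem (H : LevelAdmissible a w g) {p : ℝ × ℝ≥0∞}
    (hp : p ∈ maxLevelIntervals a w g) {t : ℝ} (ht : t ∈ extIoo p.1 p.2) :
    levelFun a w g t = RR w g p.1 p.2 * ENNReal.ofReal (w t) := by
  have hex : ∃ α β, IsMaxLevelInterval a w g α β ∧ α < t ∧ ENNReal.ofReal t < β :=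
    ⟨p.1, p.2, hp, ht⟩
  obtain ⟨hmax, hmem⟩ := hex.choose_spec.choose_spec
  have hchosen : p = (hex.choose, hex.choose_spec.choose) :=
    H.pairwiseDisjoint_maxLevelIntervals.elim hp hmax (not_disjoint_iff.2 ⟨t, ht, hmem⟩)
  rw [levelFun, dif_pos hex, hchosen]

theorem measurable_levelFun (H : LevelAdmissible a w g) (hg : Measurable g) :
    Measurable (levelFun a w g) :=
  measurable_of_eqOn_biUnion H.countable_maxLevelIntervals
    (fun _ _ => measurableSet_extIoo _ _)
    (fun _ _ => H.weight_measurable.ennreal_ofReal.const_mul _) hg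
    (fun _ hp _ ht => H.levelFun_of_mem hp ht) fun _ => levelFun_of_notMem

end LevelAdmissible

section LevelInequality

variable {a : ℝ≥0∞} {w : ℝ → ℝ} {g : ℝ → ℝ≥0∞}

theorem exists_lt_massIoo_of_lt_setLIntegral_Ioi {h : ℝ → ℝ≥0∞} {α : ℝ} {c : ℝ≥0∞}
    (hc : c < ∫⁻ t in Ioi α, h t) : ∃ β, c < massIoo h α β := by
  have hUnion : Ioi α = ⋃ n : ℕ, Ioo α (n : ℝ) := by
    ext t
    simp [exists_nat_gt]
  have hmono : Monotone fun n : ℕ => Ioo α (n : ℝ) := fun m n hmn =>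
    Ioo_subset_Ioo_right (Nat.cast_le.2 hmn)
  rw [hUnion, setLIntegral_iUnion_of_directed _ hmono.directed_le] at hc
  exact (lt_iSup_iff.1 hc).imp' Nat.cast fun _ hn => hn

theorem Rq_tsub_mul_massIoo_le (hw : Measurable w) (α β : ℝ) (l : ℝ≥0∞) :
    (Rq w g α β - l) * massIoo (ENNReal.ofReal ∘ w) α β
      ≤ ∫⁻ t in Ioo α β, (g t - l * ENNReal.ofReal (w t)) := by
  set W := massIoo (ENNReal.ofReal ∘ w) α β
  have hwE : Measurable fun t => ENNReal.ofReal (w t) := hw.ennreal_ofReal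
  rcases eq_or_ne W ∞ with htop | htop
  · have hRq : Rq w g α β = 0 := by
      change massIoo g α β / W = 0
      rw [htop, ENNReal.div_top]
    simp [hRq]
  calc (Rq w g α β - l) * W = Rq w g α β * W - l * W := ENNReal.sub_mul fun _ _ => htop
    _ ≤ (∫⁻ t in Ioo α β, g t) - ∫⁻ t in Ioo α β, l * ENNReal.ofReal (w t) := by
        rw [lintegral_const_mul _ hwE]
        gcongr
        exacts [ENNReal.mul_le_of_le_div le_rfl, le_rfl]
    _ ≤ ∫⁻ t in Ioo α β, (g t - l * ENNReal.ofReal (w t)) :=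
        lintegral_sub_le _ _ (hwE.const_mul l)

theorem RR_tsub_mul_le (hw : Measurable w) {α : ℝ} (hα : 0 ≤ α) (β l : ℝ≥0∞) :
    (RR w g α β - l) * ∫⁻ t in extIoo α β, ENNReal.ofReal (w t)
      ≤ ∫⁻ t in extIoo α β, (g t - l * ENNReal.ofReal (w t)) := by
  rcases eq_or_ne β ∞ with rfl | hβ
  · rw [extIoo_top]
    refine ENNReal.mul_le_of_forall_lt fun c hc b hb => ?_
    obtain ⟨n, hn⟩ := exists_lt_massIoo_of_lt_setLIntegral_Ioi hb
    have hc' : c + l < limsup (Rq w g α) atTop := by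
      simpa [RR] using lt_tsub_iff_right.1 hc
    have hl : l ≠ ∞ := (le_add_self.trans_lt hc').ne_top
    obtain ⟨s, hs, hns⟩ := ((frequently_lt_of_lt_limsup (by isBoundedDefault) hc').and_eventually
      (eventually_ge_atTop n)).exists
    calc c * b ≤ (Rq w g α s - l) * massIoo (ENNReal.ofReal ∘ w) α s := by
          gcongr
          · exact ENNReal.le_sub_of_add_le_right hl hs.le
          · exact hn.le.trans (massIoo_mono _ le_rfl hns)
      _ ≤ ∫⁻ t in Ioo α s, (g t - l * ENNReal.ofReal (w t)) := Rq_tsub_mul_massIoo_le hw α s l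
      _ ≤ ∫⁻ t in Ioi α, (g t - l * ENNReal.ofReal (w t)) :=
          lintegral_mono_set Ioo_subset_Ioi_self
  · rw [extIoo_of_ne_top hα hβ, RR, if_neg hβ]
    exact Rq_tsub_mul_massIoo_le hw α β.toReal l

theorem LevelAdmissible.lintegral_levelFun_tsub_le (H : LevelAdmissible a w g) (l : ℝ≥0∞) :
    ∫⁻ t in Iset a, (levelFun a w g t - l * ENNReal.ofReal (w t))
      ≤ ∫⁻ t in Iset a, (g t - l * ENNReal.ofReal (w t)) := by
  refine setLIntegral_le_of_biUnion H.countable_maxLevelIntervals (measurableSet_Iset a)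
    (fun _ _ => measurableSet_extIoo _ _)
    (fun p hp t ht => ⟨hp.1.1.trans_lt ht.1, ht.2.trans_le hp.1.2.2.1⟩)
    H.pairwiseDisjoint_maxLevelIntervals (fun p hp => ?_)
    fun t ht => (congrArg (· - _) (levelFun_of_notMem ht.2)).le
  have hlevel : EqOn (fun t => levelFun a w g t - l * ENNReal.ofReal (w t))
      (fun t => (RR w g p.1 p.2 - l) * ENNReal.ofReal (w t)) (extIoo p.1 p.2) := fun t ht => by
    simp only [H.levelFun_of_mem hp ht, ENNReal.sub_mul fun _ _ => ENNReal.ofReal_ne_top]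
  rw [setLIntegral_congr_fun (measurableSet_extIoo _ _) hlevel,
    lintegral_const_mul _ H.weight_measurable.ennreal_ofReal]
  exact RR_tsub_mul_le H.weight_measurable hp.1.1 p.2 l

theorem levelAdmissible_of_lintegral_tsub_ne_top (hw_pos : ∀ t ∈ Iset a, 0 < w t)
    (hw : Measurable w) (hW : ∀ t ∈ Iset a, ∫⁻ s in Ioo 0 t, ENNReal.ofReal (w s) ≠ ∞)
    {l : ℝ≥0∞} (hl : l ≠ ∞)
    (hfin : ∫⁻ t in Iset a, (g t - l * ENNReal.ofReal (w t)) ≠ ∞) : LevelAdmissible a w g where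
  weight_pos := hw_pos
  weight_measurable := hw
  weight_ne_top := hW
  ne_top t ht := by
    have hsub : Ioo 0 t ⊆ Iset a := fun s hs => mem_Iset_of_le hs.1 hs.2.le ht
    have hle : massIoo g 0 t ≤ (∫⁻ s in Ioo 0 t, (g s - l * ENNReal.ofReal (w s)))
        + l * ∫⁻ s in Ioo 0 t, ENNReal.ofReal (w s) := by
      rw [← lintegral_const_mul _ hw.ennreal_ofReal,
        ← lintegral_add_right _ (hw.ennreal_ofReal.const_mul l)]
      exact lintegral_mono fun s => le_tsub_add
    exact ne_top_of_le_ne_top (ENNReal.add_ne_top.2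
      ⟨ne_top_of_le_ne_top hfin (lintegral_mono_set hsub), ENNReal.mul_ne_top hl (hW t ht)⟩) hle

instance (I : Set ℝ) (w : ℝ → ℝ) : SFinite (wMeas I w) := by
  unfold wMeas
  infer_instance

theorem lintegral_div_tsub_wMeas (hw_pos : ∀ t ∈ Iset a, 0 < w t) (hw : Measurable w)
    (hg : Measurable g) (l : ℝ≥0∞) :
    ∫⁻ t, (g t / ENNReal.ofReal (w t) - l) ∂wMeas (Iset a) w
      = ∫⁻ t in Iset a, (g t - l * ENNReal.ofReal (w t)) := by
  have hmeas : Measurable fun t => g t / ENNReal.ofReal (w t) - l :=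
    (hg.div hw.ennreal_ofReal).sub_const l
  rw [wMeas, lintegral_withDensity_eq_lintegral_mul _ hw.ennreal_ofReal hmeas]
  refine setLIntegral_congr_fun (measurableSet_Iset a) fun t ht => ?_
  have hwt : ENNReal.ofReal (w t) ≠ 0 := (ENNReal.ofReal_pos.2 (hw_pos t ht)).ne'
  simp only [Pi.mul_apply]
  rw [ENNReal.mul_sub fun _ _ => ENNReal.ofReal_ne_top,
    ENNReal.mul_div_cancel hwt ENNReal.ofReal_ne_top, mul_comm]

end LevelInequality

theorem stmt_10_general {a : ℝ≥0∞} {w : ℝ → ℝ} {g : ℝ → ℝ≥0∞}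
    (hw_pos : ∀ x ∈ Iset a, 0 < w x) (hw_meas : Measurable w)
    (hW_fin : ∀ t ∈ Iset a, ∫⁻ s in Ioo 0 t, ENNReal.ofReal (w s) ≠ ∞) (hg : Measurable g) :
    (∀ l : ℝ≥0∞, ∫⁻ t in Iset a, (levelFun a w g t - l * ENNReal.ofReal (w t))
        ≤ ∫⁻ t in Iset a, (g t - l * ENNReal.ofReal (w t))) ∧
    (∀ x : ℝ, 0 < x →
      ∫⁻ t in Ioo 0 x,
          rearrE (wMeas (Iset a) w) (fun s => levelFun a w g s / ENNReal.ofReal (w s)) t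
        ≤ ∫⁻ t in Ioo 0 x, rearrE (wMeas (Iset a) w) (fun s => g s / ENNReal.ofReal (w s)) t) := by
  have hgw : Measurable fun s => g s / ENNReal.ofReal (w s) := hg.div hw_meas.ennreal_ofReal
  constructor
  · intro l
    rcases eq_or_ne l ∞ with rfl | hl
    · refine (setLIntegral_mono' (measurableSet_Iset a) fun t ht => ?_)
      simp [ENNReal.top_mul, hw_pos t ht]
    by_cases hfin : ∫⁻ t in Iset a, (g t - l * ENNReal.ofReal (w t)) = ∞
    · exact hfin ▸ le_top
    exact (levelAdmissible_of_lintegral_tsub_ne_top hw_pos hw_meas hW_fin hl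
      hfin).lintegral_levelFun_tsub_le l
  · intro x hx
    by_cases hfin : ∫⁻ t in Ioo 0 x,
        rearrE (wMeas (Iset a) w) (fun s => g s / ENNReal.ofReal (w s)) t = ∞
    · exact hfin ▸ le_top
    obtain ⟨l, hl, hl_fin⟩ := exists_lintegral_tsub_ne_top _ hgw hx hfin
    rw [lintegral_div_tsub_wMeas hw_pos hw_meas hg] at hl_fin
    have H := levelAdmissible_of_lintegral_tsub_ne_top hw_pos hw_meas hW_fin hl hl_fin
    have hlevel := H.measurable_levelFun hg
    have hlevel_w : Measurable fun s => levelFun a w g s / ENNReal.ofReal (w s) :=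
      hlevel.div hw_meas.ennreal_ofReal
    refine setLIntegral_rearrE_mono_of_tsub _ hlevel_w hgw (fun r => ?_) x
    rw [lintegral_div_tsub_wMeas hw_pos hw_meas hlevel, lintegral_div_tsub_wMeas hw_pos hw_meas hg]
    exact H.lintegral_levelFun_tsub_le r

/-- If `f*/w ∈ L₁+L∞(ω)` then the level function `f⁰` of `f` w.r.t. `w`
satisfies `∫_I (f⁰ − λw)₊ ≤ ∫_I (f* − λw)₊` for all `λ > 0`, and consequently
`(f⁰/w)^{*,w} ≺ (f*/w)^{*,w}` on `(0, W(a))`. -/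
theorem stmt_10 (a : ℝ≥0∞) (ha : 0 < a) (w f : ℝ → ℝ)
    (hw_pos : ∀ x ∈ Iset a, 0 < w x) (hw_anti : AntitoneOn w (Iset a)) (hw_meas : Measurable w)
    (hW_fin : ∀ t ∈ Iset a, ∫⁻ s in Set.Ioo 0 t, ENNReal.ofReal (w s) ≠ ∞)
    (hf_meas : Measurable f)
    (hL1Linf : ∀ x : ℝ, 0 < x →
      ∫⁻ t in Set.Ioo 0 x,
          rearrE (wMeas (Iset a) w) (fun s => rearr (volI a) f s / ENNReal.ofReal (w s)) t ≠ ∞) :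
    (∀ lam : ℝ, 0 < lam →
      ∫⁻ t in Iset a,
          (levelFun a w (rearr (volI a) f) t - ENNReal.ofReal (lam * w t))
        ≤ ∫⁻ t in Iset a, (rearr (volI a) f t - ENNReal.ofReal (lam * w t))) ∧
    (∀ x : ℝ, 0 < x → ENNReal.ofReal x < bval a w →
      ∫⁻ t in Set.Ioo 0 x,
          rearrE (wMeas (Iset a) w)
            (fun s => levelFun a w (rearr (volI a) f) s / ENNReal.ofReal (w s)) t
        ≤ ∫⁻ t in Set.Ioo 0 x,
            rearrE (wMeas (Iset a) w) (fun s => rearr (volI a) f s / ENNReal.ofReal (w s)) t) := by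
  have hmeas : Measurable (rearr (volI a) f) := (antitone_rearrE (volI a) _).measurable
  have h := stmt_10_general hw_pos hw_meas hW_fin hmeas
  exact ⟨fun lam hlam => by simpa only [ENNReal.ofReal_mul hlam.le] using h.1 (.ofReal lam),
    fun x hx _ => h.2 x hx⟩
end

section
/- Let ψ : [0,∞) → [0,∞) be a convex increasing function, and let f, g : (0,∞) → [0,∞) be non-increasing functions, integrable on (0,x) for every x > 0, such that ∫₀ˣ f dm ≤ ∫₀ˣ g dm for all x > 0. Then ∫₀ˣ ψ∘f dm ≤ ∫₀ˣ ψ∘g dm for all x > 0, the inequality understood in [0,∞]. Consequently, for any σ-finite measure space (Ω,μ) and f, g ∈ L₁+L∞(Ω,μ), the submajorization f ≺_μ g implies ψ(|f|) ≺_μ ψ(|g|). -/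
open MeasureTheory Set Filter
open scoped ENNReal

/-- Decreasing rearrangement of a real function on a general measure space. -/
noncomputable def rearrG {Ω : Type} [MeasurableSpace Ω] (μ : Measure Ω) (f : Ω → ℝ) (t : ℝ) :
    ℝ≥0∞ :=
  sInf {s : ℝ≥0∞ | 0 < s ∧ μ {x | s < ENNReal.ofReal |f x|} ≤ ENNReal.ofReal t}

/-!
Everything happens in `[0, ∞]`, where a supporting line of slope `c u` at `u` is written without
subtraction as `ψ u + c u * v ≤ ψ v + c u * u`. Put `u = f t` (truncated at a finite level),
`v = g t` and integrate: the weight `c (f t)` is non-increasing in `t`, so by the layer cake formula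
`f ≺ g` gives `∫ f * c(f) ≤ ∫ g * c(f)`, and cancelling `∫ f * c(f)` leaves `∫ ψ(f) ≤ ∫ ψ(g)`.
For functions on `Ω`, `(ψ ∘ f)^* = ψ ∘ f^*` on `(0, μ Ω)`, while every rearrangement vanishes
from `μ Ω` on, so that the general case reduces to the half-line.
-/

section

open scoped NNReal Topology

/-! ### Decreasing rearrangements -/

section Rearrangement

variable {Ω : Type*} [MeasurableSpace Ω] {μ : Measure Ω} {F : Ω → ℝ≥0∞} {Ψ : ℝ≥0∞ → ℝ≥0∞} {t : ℝ}

/-- The decreasing rearrangement `F^{*,μ}` of a `[0, ∞]`-valued function; `rearrG μ f` is the case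
`F = |f|`. For a non-measurable `F` the distribution function uses the outer measure of `μ`. -/
noncomputable def rearrangement (μ : Measure Ω) (F : Ω → ℝ≥0∞) (t : ℝ) : ℝ≥0∞ :=
  sInf {s : ℝ≥0∞ | 0 < s ∧ μ {x | s < F x} ≤ ENNReal.ofReal t}

lemma rearrangement_antitone : Antitone (rearrangement μ F) := fun _ _ hst =>
  sInf_le_sInf fun _ hs => ⟨hs.1, hs.2.trans (ENNReal.ofReal_le_ofReal hst)⟩

lemma measure_lt_le_of_rearrangement_lt {a : ℝ≥0∞} (h : rearrangement μ F t < a) :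
    μ {x | a < F x} ≤ ENNReal.ofReal t := by
  obtain ⟨s, ⟨_, hs⟩, hsa⟩ := sInf_lt_iff.1 h
  exact (measure_mono fun x (hx : a < F x) => hsa.trans hx).trans hs

lemma rearrangement_le_iff {a : ℝ≥0∞} :
    rearrangement μ F t ≤ a ↔ μ {x | a < F x} ≤ ENNReal.ofReal t := by
  refine ⟨fun h => ?_, fun h => ?_⟩
  · rcases eq_or_ne a ∞ with rfl | ha
    · simp
    obtain ⟨u, hu, hau, hlim⟩ := exists_seq_strictAnti_tendsto' ha.lt_top
    have hunion : {x | a < F x} ⊆ ⋃ n, {x | u n < F x} := fun x hx =>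
      mem_iUnion.2 (hlim.eventually_lt_const hx).exists
    have hmono : Monotone fun n => {x | u n < F x} := fun _ _ hmn _ hx =>
      (hu.antitone hmn).trans_lt hx
    calc μ {x | a < F x} ≤ ⨆ n, μ {x | u n < F x} :=
          (measure_mono hunion).trans_eq hmono.measure_iUnion
      _ ≤ ENNReal.ofReal t :=
          iSup_le fun n => measure_lt_le_of_rearrangement_lt (h.trans_lt (hau n).1)
  · refine le_of_forall_gt_imp_ge_of_dense fun r hr => sInf_le ⟨pos_of_gt hr, ?_⟩
    exact (measure_mono fun x (hx : r < F x) => hr.trans hx).trans h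

lemma rearrangement_eq_zero (ht : μ univ ≤ ENNReal.ofReal t) : rearrangement μ F t = 0 :=
  nonpos_iff_eq_zero.1 (rearrangement_le_iff.2 ((measure_mono (subset_univ _)).trans ht))

lemma rearrangement_comp (hmono : Monotone Ψ) (hlsc : LowerSemicontinuous Ψ)
    (ht : ENNReal.ofReal t < μ univ) :
    rearrangement μ (Ψ ∘ F) t = Ψ (rearrangement μ F t) := by
  refine le_antisymm (rearrangement_le_iff.2 ?_) (le_of_not_gt fun hlt => ?_)
  · exact (measure_mono fun x hx => hmono.reflect_lt hx).trans (rearrangement_le_iff.1 le_rfl)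
  set r := rearrangement μ (Ψ ∘ F) t
  have hr : μ {x | r < Ψ (F x)} ≤ ENNReal.ofReal t := rearrangement_le_iff.1 le_rfl
  rcases eq_zero_or_pos (rearrangement μ F t) with hzero | hpos
  · refine ht.not_ge ((measure_mono fun x _ => ?_).trans hr)
    exact hlt.trans_le (hmono (hzero ▸ zero_le))
  · obtain ⟨b, hb, hbr⟩ := exists_Ioc_subset_of_mem_nhds (hlsc _ r hlt) ⟨0, hpos⟩
    obtain ⟨b', hbb', hb'⟩ := exists_between hb
    refine hb'.not_ge (rearrangement_le_iff.2 ((measure_mono fun x hx => ?_).trans hr))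
    exact (hbr ⟨hbb', hb'.le⟩ : r < Ψ b').trans_le (hmono (le_of_lt hx))

-- The cut-off at `μ Ω` matters only if `Ψ 0 ≠ 0`: beyond it the left integrand is `0`, not `Ψ 0`.
lemma setLIntegral_rearrangement_comp (hmono : Monotone Ψ) (hlsc : LowerSemicontinuous Ψ) (x : ℝ) :
    ∫⁻ t in Ioo 0 x, rearrangement μ (Ψ ∘ F) t =
      ∫⁻ t in Ioo 0 (min (ENNReal.ofReal x) (μ univ)).toReal, Ψ (rearrangement μ F t) := by
  have hmem (t : ℝ) : t ∈ Ioo 0 (min (ENNReal.ofReal x) (μ univ)).toReal ↔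
      t ∈ Ioo 0 x ∧ ENNReal.ofReal t < μ univ := by
    simp only [mem_Ioo, and_assoc]
    refine and_congr_right fun ht => ?_
    rw [← ENNReal.ofReal_lt_iff_lt_toReal ht.le (by simp), lt_min_iff,
      ENNReal.ofReal_lt_ofReal_iff_of_nonneg ht.le]
  rw [← lintegral_inter_add_sdiff _ (Ioo 0 x) measurableSet_Ioo,
    inter_eq_right.2 fun t ht => ((hmem t).1 ht).1,
    setLIntegral_eq_zero (measurableSet_Ioo.diff measurableSet_Ioo) fun t ht =>
      rearrangement_eq_zero (not_lt.1 fun h => ht.2 ((hmem t).2 ⟨ht.1, h⟩)), add_zero]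
  exact setLIntegral_congr_fun measurableSet_Ioo fun t ht =>
    rearrangement_comp hmono hlsc ((hmem t).1 ht).2

end Rearrangement

/-! ### Submajorization on the half-line -/

/-- Submajorization `F ≺ G` of functions on `(0, ∞)` by their primitives. For rearrangements
`F = f^{*,μ}` and `G = g^{*,μ}` this is the relation `f ≺_μ g`. -/
def Submajorized (F G : ℝ → ℝ≥0∞) : Prop :=
  ∀ x : ℝ, 0 < x → ∫⁻ t in Ioo 0 x, F t ≤ ∫⁻ t in Ioo 0 x, G t

lemma exists_ae_eq_Ioo_of_Ioo_subset {S : Set ℝ} {a : ℝ} (hS : BddAbove S) (ha : S ⊆ Ioi a)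
    (hlower : ∀ b ∈ S, Ioo a b ⊆ S) : ∃ y, S =ᵐ[volume] Ioo a y := by
  rcases S.eq_empty_or_nonempty with rfl | hne
  · exact ⟨a, by simp⟩
  have hle : S ⊆ Ioc a (sSup S) := fun b hb => ⟨ha hb, le_csSup hS hb⟩
  have hge : Ioo a (sSup S) ⊆ S := fun b hb =>
    let ⟨d, hd, hbd⟩ := exists_lt_of_lt_csSup hne hb.2
    hlower d hd ⟨hb.1, hbd⟩
  exact ⟨sSup S, (hle.eventuallyLE.trans Ioo_ae_eq_Ioc.symm.le).antisymm hge.eventuallyLE⟩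

lemma lintegral_mul_coe_eq_lintegral_setLIntegral_lt {α : Type*} [MeasurableSpace α]
    {ν : Measure α} [SFinite ν] {H : α → ℝ≥0∞} {w : α → ℝ≥0} (hH : AEMeasurable H ν)
    (hw : AEMeasurable w ν) :
    ∫⁻ a, H a * w a ∂ν = ∫⁻ s in Ioi (0 : ℝ), ∫⁻ a in {a | s < w a}, H a ∂ν := by
  calc ∫⁻ a, H a * w a ∂ν = ∫⁻ a, ENNReal.ofReal (w a) ∂ν.withDensity H := by
        simp only [ENNReal.ofReal_coe_nnreal,
          lintegral_withDensity_eq_lintegral_mul₀ hH hw.coe_nnreal_ennreal, Pi.mul_apply]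
    _ = ∫⁻ s in Ioi (0 : ℝ), ν.withDensity H {a | s < w a} :=
        lintegral_eq_lintegral_meas_lt _ (.of_forall fun a => (w a).2)
          (hw.coe_nnreal_real.mono_ac (withDensity_absolutelyContinuous _ _))
    _ = ∫⁻ s in Ioi (0 : ℝ), ∫⁻ a in {a | s < w a}, H a ∂ν := by
        simp only [withDensity_apply']

lemma aemeasurable_of_antitoneOn_Ioi {β : Type*} [LinearOrder β] [TopologicalSpace β]
    [OrderTopology β] [SecondCountableTopology β] [MeasurableSpace β] [BorelSpace β] {u : ℝ → β}
    {a : ℝ} (hu : AntitoneOn u (Ioi a)) (x : ℝ) : AEMeasurable u (volume.restrict (Ioo a x)) :=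
  aemeasurable_restrict_of_antitoneOn measurableSet_Ioo (hu.mono Ioo_subset_Ioi_self)

namespace Submajorized

variable {F G : ℝ → ℝ≥0∞}

lemma setLIntegral_le (h : Submajorized F G) (x : ℝ) :
    ∫⁻ t in Ioo 0 x, F t ≤ ∫⁻ t in Ioo 0 x, G t := by
  rcases le_or_gt x 0 with hx | hx
  · simp [Ioo_eq_empty hx.not_gt]
  · exact h x hx

lemma mul_antitoneOn (h : Submajorized F G)
    (hF : ∀ x, 0 < x → AEMeasurable F (volume.restrict (Ioo 0 x)))
    (hG : ∀ x, 0 < x → AEMeasurable G (volume.restrict (Ioo 0 x)))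
    {w : ℝ → ℝ≥0} (hw : AntitoneOn w (Ioi 0)) :
    Submajorized (fun t => F t * w t) (fun t => G t * w t) := by
  intro x hx
  have hwm := aemeasurable_of_antitoneOn_Ioi hw x
  rw [lintegral_mul_coe_eq_lintegral_setLIntegral_lt (hF x hx) hwm,
    lintegral_mul_coe_eq_lintegral_setLIntegral_lt (hG x hx) hwm]
  refine lintegral_mono fun s => ?_
  simp only [Measure.restrict_restrict' measurableSet_Ioo]
  obtain ⟨y, hy⟩ : ∃ y, ({t | s < w t} ∩ Ioo 0 x : Set ℝ) =ᵐ[volume] Ioo 0 y := by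
    refine exists_ae_eq_Ioo_of_Ioo_subset ⟨x, fun t ht => ht.2.2.le⟩ (fun t ht => ht.2.1) ?_
    exact fun b ⟨hsb, hb⟩ t ht =>
      ⟨hsb.trans_le (NNReal.coe_le_coe.2 (hw ht.1 hb.1 ht.2.le)), ht.1, ht.2.trans hb.2⟩
  rw [setLIntegral_congr hy, setLIntegral_congr hy]
  exact h.setLIntegral_le y

end Submajorized

/-! ### Supporting lines of convex functions -/

lemma exists_supporting_slope_of_mem_interior {S : Set ℝ} {φ : ℝ → ℝ} {u : ℝ}
    (hφ : ConvexOn ℝ S φ) (hu : u ∈ interior S) : ∃ c, ∀ v ∈ S, φ u + c * (v - u) ≤ φ v := by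
  refine ⟨derivWithin φ (Ioi u) u, fun v hv => ?_⟩
  rcases lt_trichotomy u v with huv | rfl | hvu
  · have hslope := hφ.rightDeriv_le_slope_of_mem_interior hu hv huv
    rw [slope_def_field, le_div_iff₀ (sub_pos.2 huv)] at hslope
    linarith
  · simp
  · have hslope := (hφ.slope_le_leftDeriv_of_mem_interior hv hu hvu).trans
      (hφ.leftDeriv_le_rightDeriv_of_mem_interior hu)
    rw [slope_def_field, div_le_iff₀ (sub_pos.2 hvu)] at hslope
    linarith

lemma exists_nnreal_supporting_slope {ψ : ℝ → ℝ} (hconv : ConvexOn ℝ (Ici 0) ψ)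
    (hmono : MonotoneOn ψ (Ici 0)) {u : ℝ} (hu : 0 ≤ u) :
    ∃ c : ℝ≥0, ∀ v, 0 ≤ v → ψ u + c * (v - u) ≤ ψ v := by
  rcases hu.eq_or_lt with rfl | hpos
  · exact ⟨0, fun v hv => by simpa using hmono self_mem_Ici hv hv⟩
  obtain ⟨c, hc⟩ := exists_supporting_slope_of_mem_interior hconv (u := u) (by simpa using hpos)
  have hc0 : 0 ≤ c := by
    refine nonneg_of_mul_nonneg_left ?_ hpos
    linarith [hc 0 self_mem_Ici, hmono self_mem_Ici hu hu]
  exact ⟨⟨c, hc0⟩, hc⟩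

/-- `c u` is the slope of a supporting line of `ψ` at `u`, for every `u`. The inequality
`ψ u + c u * (v - u) ≤ ψ v` is rearranged so that no truncated subtraction occurs. -/
def IsSupportingSlope (ψ c : ℝ≥0 → ℝ≥0) : Prop :=
  ∀ u v, ψ u + c u * v ≤ ψ v + c u * u

lemma exists_isSupportingSlope {ψ : ℝ → ℝ} (hconv : ConvexOn ℝ (Ici 0) ψ)
    (hmono : MonotoneOn ψ (Ici 0)) (hψ0 : ∀ x, 0 ≤ x → 0 ≤ ψ x) :
    ∃ c, IsSupportingSlope (fun u => (ψ u).toNNReal) c := by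
  choose c hc using fun u : ℝ≥0 => exists_nnreal_supporting_slope hconv hmono u.coe_nonneg
  refine ⟨c, fun u v => ?_⟩
  rw [← NNReal.coe_le_coe]
  simp only [NNReal.coe_add, NNReal.coe_mul, Real.coe_toNNReal _ (hψ0 _ (NNReal.coe_nonneg _))]
  linarith [hc u v v.coe_nonneg]

/-- The supremum over `[0, ∞]` of the supporting lines of `ψ` with slopes `c`: an extension of `ψ`
to `[0, ∞]`, whose value at `∞` is the limit of `ψ`. The truncated subtraction is harmless because
`ψ ≥ 0`. -/
noncomputable def supportingEnvelope (ψ c : ℝ≥0 → ℝ≥0) (v : ℝ≥0∞) : ℝ≥0∞ :=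
  ⨆ u : ℝ≥0, ψ u + c u * v - c u * u

section Envelope

variable {ψ c : ℝ≥0 → ℝ≥0}

lemma supportingEnvelope_monotone : Monotone (supportingEnvelope ψ c) := fun _ _ hvw =>
  iSup_mono fun _ => by gcongr

lemma supportingEnvelope_lowerSemicontinuous : LowerSemicontinuous (supportingEnvelope ψ c) :=
  lowerSemicontinuous_iSup fun _ => Continuous.lowerSemicontinuous <|
    (ENNReal.continuous_sub_right _).comp <|
      continuous_const.add (ENNReal.continuous_const_mul ENNReal.coe_ne_top)

lemma le_supportingEnvelope_add (u : ℝ≥0) (v : ℝ≥0∞) :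
    ψ u + c u * v ≤ supportingEnvelope ψ c v + c u * u :=
  tsub_le_iff_right.1 (le_iSup (fun u : ℝ≥0 => ψ u + c u * v - c u * u) u)

lemma supportingEnvelope_eq_iSup_min (v : ℝ≥0∞) :
    supportingEnvelope ψ c v = ⨆ n : ℕ, supportingEnvelope ψ c (min v n) := by
  refine le_antisymm (le_of_forall_lt fun r hr => ?_)
    (iSup_le fun n => supportingEnvelope_monotone (min_le_left _ _))
  have hlim : Tendsto (fun n : ℕ => min v n) atTop (𝓝 v) := by
    simpa using tendsto_const_nhds.min ENNReal.tendsto_nat_nhds_top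
  obtain ⟨n, hn⟩ := (hlim.eventually (supportingEnvelope_lowerSemicontinuous v r hr)).exists
  exact lt_iSup_iff.2 ⟨n, hn⟩

namespace IsSupportingSlope

lemma supportingEnvelope_coe (hc : IsSupportingSlope ψ c) (v : ℝ≥0) :
    supportingEnvelope ψ c v = ψ v := by
  refine le_antisymm (iSup_le fun u => tsub_le_iff_right.2 (mod_cast hc u v)) ?_
  exact (ENNReal.add_le_add_iff_right (by finiteness)).1 (le_supportingEnvelope_add v v)

lemma monotone_slope (hc : IsSupportingSlope ψ c) : Monotone c := by
  intro u v huv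
  rcases huv.eq_or_lt with rfl | hlt
  · rfl
  have hsum : (c u * v + c v * u : ℝ) ≤ c u * u + c v * v := by
    have huv' := NNReal.coe_le_coe.2 (hc u v)
    have hvu' := NNReal.coe_le_coe.2 (hc v u)
    push_cast at huv' hvu'
    linarith
  have hpos : (0 : ℝ) < v - u := sub_pos.2 (NNReal.coe_lt_coe.2 hlt)
  exact NNReal.coe_le_coe.1 (le_of_mul_le_mul_right (by linarith) hpos)

end IsSupportingSlope

end Envelope

/-! ### Convex functions preserve submajorization -/

namespace Submajorized

variable {ψ c : ℝ≥0 → ℝ≥0} {F G : ℝ → ℝ≥0∞}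

lemma supportingEnvelope_comp_of_le (hc : IsSupportingSlope ψ c) {f : ℝ → ℝ≥0} {M : ℝ≥0}
    (h : Submajorized (fun t => f t) G) (hf : AntitoneOn f (Ioi 0)) (hM : ∀ t, f t ≤ M)
    (hG : ∀ x, 0 < x → AEMeasurable G (volume.restrict (Ioo 0 x))) :
    Submajorized (fun t => supportingEnvelope ψ c (f t))
      (fun t => supportingEnvelope ψ c (G t)) := by
  intro x hx
  have hfm (x : ℝ) : AEMeasurable (fun t => (f t : ℝ≥0∞)) (volume.restrict (Ioo 0 x)) :=
    (aemeasurable_of_antitoneOn_Ioi hf x).coe_nnreal_ennreal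
  have hw : AntitoneOn (fun t => c (f t)) (Ioi 0) := hc.monotone_slope.comp_antitoneOn hf
  have hwm := (aemeasurable_of_antitoneOn_Ioi hw x).coe_nnreal_ennreal
  have hfin : ∫⁻ t in Ioo 0 x, f t * c (f t) ≠ ∞ :=
    (setLIntegral_lt_top_of_le_nnreal (by simp) ⟨M * c M, fun t _ => by
      exact_mod_cast mul_le_mul' (hM t) (hc.monotone_slope (hM t))⟩).ne
  refine (ENNReal.add_le_add_iff_right hfin).1 ?_
  calc (∫⁻ t in Ioo 0 x, supportingEnvelope ψ c (f t)) + ∫⁻ t in Ioo 0 x, f t * c (f t)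
      ≤ (∫⁻ t in Ioo 0 x, supportingEnvelope ψ c (f t)) + ∫⁻ t in Ioo 0 x, G t * c (f t) := by
        exact add_le_add_right (h.mul_antitoneOn (fun y _ => hfm y) hG hw x hx) _
    _ = ∫⁻ t in Ioo 0 x, supportingEnvelope ψ c (f t) + G t * c (f t) :=
        (lintegral_add_right' _ ((hG x hx).mul hwm)).symm
    _ ≤ ∫⁻ t in Ioo 0 x, supportingEnvelope ψ c (G t) + f t * c (f t) := by
        refine lintegral_mono fun t => ?_
        simpa only [hc.supportingEnvelope_coe, mul_comm] using
          le_supportingEnvelope_add (f t) (G t)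
    _ = (∫⁻ t in Ioo 0 x, supportingEnvelope ψ c (G t)) + ∫⁻ t in Ioo 0 x, f t * c (f t) :=
        lintegral_add_right' _ ((hfm x).mul hwm)

lemma supportingEnvelope_comp (hc : IsSupportingSlope ψ c) (h : Submajorized F G)
    (hF : AntitoneOn F (Ioi 0))
    (hG : ∀ x, 0 < x → AEMeasurable G (volume.restrict (Ioo 0 x))) :
    Submajorized (fun t => supportingEnvelope ψ c (F t))
      (fun t => supportingEnvelope ψ c (G t)) := by
  intro x hx
  have hmin (n : ℕ) : AntitoneOn (fun t => min (F t) n) (Ioi 0) := fun s hs t ht hst =>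
    min_le_min_right _ (hF hs ht hst)
  have htrunc (n : ℕ) : ∫⁻ t in Ioo 0 x, supportingEnvelope ψ c (min (F t) n) ≤
      ∫⁻ t in Ioo 0 x, supportingEnvelope ψ c (G t) := by
    have hcoe (t : ℝ) : ((min (F t) n).toNNReal : ℝ≥0∞) = min (F t) n :=
      ENNReal.coe_toNNReal (by simp)
    have hsub : Submajorized (fun t => (min (F t) n).toNNReal) G := fun y hy =>
      (lintegral_mono fun t => (hcoe t).trans_le (min_le_left _ _)).trans (h y hy)
    simpa only [hcoe] using hsub.supportingEnvelope_comp_of_le hc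
      (fun s hs t ht hst => ENNReal.toNNReal_mono (by simp) (hmin n hs ht hst))
      (fun t => ENNReal.toNNReal_mono (ENNReal.natCast_ne_top n) (min_le_right _ _)) hG x hx
  simp only [supportingEnvelope_eq_iSup_min (F _)]
  rw [lintegral_iSup']
  · exact iSup_le htrunc
  · exact fun n => aemeasurable_of_antitoneOn_Ioi
      (supportingEnvelope_monotone.comp_antitoneOn (hmin n)) x
  · exact .of_forall fun t m n hmn =>
      supportingEnvelope_monotone (min_le_min_left _ (by exact_mod_cast hmn))

lemma rearrangement_supportingEnvelope_comp (hc : IsSupportingSlope ψ c) {Ω : Type*}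
    [MeasurableSpace Ω] {μ : Measure Ω} {F G : Ω → ℝ≥0∞}
    (h : Submajorized (rearrangement μ F) (rearrangement μ G)) :
    Submajorized (rearrangement μ (supportingEnvelope ψ c ∘ F))
      (rearrangement μ (supportingEnvelope ψ c ∘ G)) := by
  intro x _
  simp only [setLIntegral_rearrangement_comp supportingEnvelope_monotone
    supportingEnvelope_lowerSemicontinuous]
  exact (h.supportingEnvelope_comp hc (rearrangement_antitone.antitoneOn _)
    fun _ _ => rearrangement_antitone.measurable.aemeasurable).setLIntegral_le _

end Submajorized

lemma setLIntegral_ofReal_eq_ofReal_setIntegral {α : Type*} [MeasurableSpace α] {μ : Measure α}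
    {s : Set α} {f : α → ℝ} (hs : MeasurableSet s) (hf0 : ∀ a ∈ s, 0 ≤ f a)
    (hf : IntegrableOn f s μ) :
    ∫⁻ a in s, ENNReal.ofReal (f a) ∂μ = ENNReal.ofReal (∫ a in s, f a ∂μ) :=
  (ofReal_integral_eq_lintegral_ofReal hf (ae_restrict_of_forall_mem hs hf0)).symm

theorem stmt_13_general (ψ : ℝ → ℝ) (hconv : ConvexOn ℝ (Ici 0) ψ)
    (hmono : MonotoneOn ψ (Ici 0)) (hψ0 : ∀ x : ℝ, 0 ≤ x → 0 ≤ ψ x) :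
    (∀ f g : ℝ → ℝ, (∀ x ∈ Ioi (0 : ℝ), 0 ≤ f x) → (∀ x ∈ Ioi (0 : ℝ), 0 ≤ g x) →
      AntitoneOn f (Ioi 0) →
      (∀ x : ℝ, 0 < x → IntegrableOn f (Ioo 0 x)) →
      (∀ x : ℝ, 0 < x → IntegrableOn g (Ioo 0 x)) →
      (∀ x : ℝ, 0 < x → ∫ t in Ioo 0 x, f t ≤ ∫ t in Ioo 0 x, g t) →
      Submajorized (fun t => ENNReal.ofReal (ψ (f t))) (fun t => ENNReal.ofReal (ψ (g t)))) ∧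
    (∀ (Ω : Type*) [MeasurableSpace Ω] (μ : Measure Ω) (f g : Ω → ℝ),
      Submajorized (rearrangement μ fun y => ENNReal.ofReal |f y|)
        (rearrangement μ fun y => ENNReal.ofReal |g y|) →
      Submajorized (rearrangement μ fun y => ENNReal.ofReal |ψ (|f y|)|)
        (rearrangement μ fun y => ENNReal.ofReal |ψ (|g y|)|)) := by
  obtain ⟨c, hc⟩ := exists_isSupportingSlope hconv hmono hψ0
  have hext {r : ℝ} (hr : 0 ≤ r) :
      supportingEnvelope (fun u => (ψ u).toNNReal) c (ENNReal.ofReal r) = ENNReal.ofReal (ψ r) := by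
    simpa only [ENNReal.ofReal, Real.coe_toNNReal r hr] using hc.supportingEnvelope_coe r.toNNReal
  refine ⟨fun f g hf0 hg0 hf hfi hgi hfg x hx => ?_, fun Ω _ μ f g hfg => ?_⟩
  · have hsub : Submajorized (fun t => ENNReal.ofReal (f t)) (fun t => ENNReal.ofReal (g t)) := by
      intro y hy
      rw [setLIntegral_ofReal_eq_ofReal_setIntegral measurableSet_Ioo (fun t ht => hf0 t ht.1)
          (hfi y hy),
        setLIntegral_ofReal_eq_ofReal_setIntegral measurableSet_Ioo (fun t ht => hg0 t ht.1)
          (hgi y hy)]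
      exact ENNReal.ofReal_le_ofReal (hfg y hy)
    have hcomp := hsub.supportingEnvelope_comp hc (ENNReal.ofReal_mono.comp_antitoneOn hf)
      (fun y hy => (hgi y hy).aemeasurable.ennreal_ofReal) x hx
    rwa [setLIntegral_congr_fun measurableSet_Ioo fun t ht => hext (hf0 t ht.1),
      setLIntegral_congr_fun measurableSet_Ioo fun t ht => hext (hg0 t ht.1)] at hcomp
  · have habs (k : Ω → ℝ) : supportingEnvelope (fun u => (ψ u).toNNReal) c ∘
        (fun y => ENNReal.ofReal |k y|) = fun y => ENNReal.ofReal |ψ (|k y|)| := by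
      funext y
      rw [Function.comp_apply, hext (abs_nonneg _), abs_of_nonneg (hψ0 _ (abs_nonneg _))]
    simpa only [habs] using hfg.rearrangement_supportingEnvelope_comp hc

end

/-- For a convex increasing `ψ : [0,∞) → [0,∞)`: (1) if `f, g ≥ 0` are
non-increasing on `(0,∞)`, locally integrable, with `∫₀ˣ f ≤ ∫₀ˣ g` for all `x > 0`, then
`∫₀ˣ ψ∘f ≤ ∫₀ˣ ψ∘g` for all `x > 0`; (2) consequently on any σ-finite measure space,
`f ≺_μ g` implies `ψ(|f|) ≺_μ ψ(|g|)` for `f, g ∈ L₁+L∞(Ω,μ)`. -/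
theorem stmt_13 (ψ : ℝ → ℝ) (hconv : ConvexOn ℝ (Set.Ici 0) ψ)
    (hmono : MonotoneOn ψ (Set.Ici 0)) (hψ0 : ∀ x : ℝ, 0 ≤ x → 0 ≤ ψ x) :
    (∀ f g : ℝ → ℝ, (∀ x ∈ Set.Ioi (0:ℝ), 0 ≤ f x) → (∀ x ∈ Set.Ioi (0:ℝ), 0 ≤ g x) →
      AntitoneOn f (Set.Ioi 0) → AntitoneOn g (Set.Ioi 0) →
      (∀ x : ℝ, 0 < x → IntegrableOn f (Set.Ioo 0 x)) →
      (∀ x : ℝ, 0 < x → IntegrableOn g (Set.Ioo 0 x)) →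
      (∀ x : ℝ, 0 < x → ∫ t in Set.Ioo 0 x, f t ≤ ∫ t in Set.Ioo 0 x, g t) →
      ∀ x : ℝ, 0 < x →
        ∫⁻ t in Set.Ioo 0 x, ENNReal.ofReal (ψ (f t))
          ≤ ∫⁻ t in Set.Ioo 0 x, ENNReal.ofReal (ψ (g t))) ∧
    (∀ (Ω : Type) [MeasurableSpace Ω] (μ : Measure Ω) [SigmaFinite μ],
      ∀ f g : Ω → ℝ, Measurable f → Measurable g →
      (∀ x : ℝ, 0 < x → ∫⁻ t in Set.Ioo 0 x, rearrG μ f t ≠ ∞) →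
      (∀ x : ℝ, 0 < x → ∫⁻ t in Set.Ioo 0 x, rearrG μ g t ≠ ∞) →
      (∀ x : ℝ, 0 < x →
        ∫⁻ t in Set.Ioo 0 x, rearrG μ f t ≤ ∫⁻ t in Set.Ioo 0 x, rearrG μ g t) →
      ∀ x : ℝ, 0 < x →
        ∫⁻ t in Set.Ioo 0 x, rearrG μ (fun y => ψ |f y|) t
          ≤ ∫⁻ t in Set.Ioo 0 x, rearrG μ (fun y => ψ |g y|) t) := by
  have ⟨hfun, hrearr⟩ := stmt_13_general ψ hconv hmono hψ0
  exact ⟨fun f g hf0 hg0 hf _ => hfun f g hf0 hg0 hf, fun Ω _ μ _ f g _ _ _ _ => hrearr Ω μ f g⟩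
end

section
/- Let w₁ be a non-increasing positive locally integrable function on I₁=(0,a₁) with W₁(x)=∫₀ˣ w₁ dm, and let w₂ be a non-increasing positive locally integrable function on I₂=(0,W₁(a₁)) with W₂(t)=∫₀ᵗ w₂ dm. Then for every measurable function f on I₁, sup_{t∈I₂} (1/W₂(t))·∫₀ᵗ (f*∘W₁^{-1})(s) ds = sup_{x∈I₁} (1/W₂(W₁(x)))·∫₀ˣ f*(s)·w₁(s) ds, the equality understood in [0,∞]. In particular, f belongs to the Lorentz space Λ_{M_{W₂},w₁} (i.e. f*∘W₁^{-1} belongs to the Marcinkiewicz space M_{W₂} on I₂) if and only if sup_{x∈I₁} (1/(W₂∘W₁)(x))·∫₀ˣ f* w₁ dm < ∞, and this supremum is the norm of f in Λ_{M_{W₂},w₁}. -/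
open MeasureTheory Set Filter
open scoped ENNReal

/-- The left-hand supremum: `sup_{t∈I₂} (1/W₂(t))·∫₀ᵗ (f*∘W₁⁻¹)(s) ds`, i.e. the Marcinkiewicz
`M_{W₂}`-norm of `f* ∘ W₁⁻¹` on `I₂ = (0, W₁(a₁))`. -/
noncomputable def marcSup₁ (a₁ : ℝ≥0∞) (w₁ w₂ f : ℝ → ℝ) : ℝ≥0∞ :=
  ⨆ t ∈ Iset (bval a₁ w₁),
    (∫⁻ s in Set.Ioo 0 t, rearr (volI a₁) f (Function.invFunOn (Wfun w₁) (Iset a₁) s)) /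
      ENNReal.ofReal (Wfun w₂ t)

/-- The right-hand supremum: `sup_{x∈I₁} (1/W₂(W₁(x)))·∫₀ˣ f*·w₁ dm`. -/
noncomputable def marcSup₂ (a₁ : ℝ≥0∞) (w₁ w₂ f : ℝ → ℝ) : ℝ≥0∞ :=
  ⨆ x ∈ Iset a₁,
    (∫⁻ s in Set.Ioo 0 x, rearr (volI a₁) f s * ENNReal.ofReal (w₁ s)) /
      ENNReal.ofReal (Wfun w₂ (Wfun w₁ x))

/-!
The weight `w₁` plays the role of a derivative of `W₁`: `W₁` maps `(0, x)` bijectively onto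
`(0, W₁ x)` and pushes the measure `w₁ dm` forward to Lebesgue measure. Indeed both measures give
the initial segment `(0, W₁ y]` the mass `W₁ y`, and such segments determine a finite measure. Hence
the substitution `t = W₁ s` turns `∫₀^{W₁ x} (g ∘ W₁⁻¹) dm` into `∫₀ˣ g w₁ dm` for every `g ≥ 0`,
and reindexing the supremum by `t = W₁ x` makes the two sides agree term by term.
-/

section Interval

variable {a : ℝ≥0∞} {x y : ℝ}

lemma mem_Iset_of_le_s14 (hx : x ∈ Iset a) (hy : 0 < y) (hyx : y ≤ x) : y ∈ Iset a :=
  ⟨hy, (ENNReal.ofReal_le_ofReal hyx).trans_lt hx.2⟩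

lemma Ioo_subset_Iset (hx : x ∈ Iset a) : Ioo 0 x ⊆ Iset a :=
  fun _ hy ↦ mem_Iset_of_le_s14 hx hy.1 hy.2.le

lemma exists_rat_gt_mem_Iset (hx : x ∈ Iset a) : ∃ q : ℚ, x < q ∧ (q : ℝ) ∈ Iset a := by
  obtain ⟨q, -, hxq, hqa⟩ := ENNReal.lt_iff_exists_rat_btwn.1 hx.2
  have hlt : x < q := (ENNReal.ofReal_lt_ofReal_iff'.1 hxq).1
  exact ⟨q, hlt, hx.1.trans hlt, hqa⟩

lemma Iset_eq_biUnion_Ioo (a : ℝ≥0∞) : Iset a = ⋃ x ∈ Iset a, Ioo 0 x := by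
  refine Subset.antisymm (fun x hx ↦ ?_) (iUnion₂_subset fun _ ↦ Ioo_subset_Iset)
  obtain ⟨q, hxq, hq⟩ := exists_rat_gt_mem_Iset hx
  exact mem_biUnion hq ⟨hx.1, hxq⟩

lemma setLIntegral_Iset_eq_iSup (a : ℝ≥0∞) (g : ℝ → ℝ≥0∞) :
    ∫⁻ s in Iset a, g s = ⨆ x ∈ Iset a, ∫⁻ s in Ioo 0 x, g s := by
  refine le_antisymm ?_ (iSup₂_le fun x hx ↦ lintegral_mono_set (Ioo_subset_Iset hx))
  have exhaustion : Iset a ⊆ ⋃ q : {q : ℚ // (q : ℝ) ∈ Iset a}, Ioo (0 : ℝ) (q : ℚ) := fun x hx ↦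
    have ⟨q, hxq, hq⟩ := exists_rat_gt_mem_Iset hx
    mem_iUnion.2 ⟨⟨q, hq⟩, hx.1, hxq⟩
  have directed : Directed (· ⊆ ·)
      fun q : {q : ℚ // (q : ℝ) ∈ Iset a} ↦ Ioo (0 : ℝ) (q : ℚ) :=
    Monotone.directed_le fun p q hpq ↦ Ioo_subset_Ioo_right (Rat.cast_le.2 hpq)
  refine (lintegral_mono_set exhaustion).trans ?_
  rw [setLIntegral_iUnion_of_directed _ directed]
  exact iSup_le fun q ↦ le_iSup₂_of_le (q : ℝ) q.2 le_rfl

end Interval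

section Primitive

variable {w : ℝ → ℝ} {x : ℝ}

lemma Wfun_zero (w : ℝ → ℝ) : Wfun w 0 = 0 := by simp [Wfun]

lemma ofReal_Wfun (hnonneg : ∀ s ∈ Ioo 0 x, 0 ≤ w s) (hint : IntegrableOn w (Ioo 0 x)) :
    ENNReal.ofReal (Wfun w x) = ∫⁻ s in Ioo 0 x, ENNReal.ofReal (w s) :=
  ofReal_integral_eq_lintegral_ofReal hint (ae_restrict_of_forall_mem measurableSet_Ioo hnonneg)

lemma continuousOn_Wfun (hint : IntegrableOn w (Ioo 0 x)) : ContinuousOn (Wfun w) (Icc 0 x) :=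
  (intervalIntegral.continuousOn_primitive (by rwa [integrableOn_Icc_iff_integrableOn_Ioo])).congr
    fun _ _ ↦ integral_Ioc_eq_integral_Ioo.symm

lemma strictMonoOn_Wfun (hpos : ∀ s ∈ Ioo 0 x, 0 < w s) (hint : IntegrableOn w (Ioo 0 x)) :
    StrictMonoOn (Wfun w) (Icc 0 x) := by
  have eq_intervalIntegral {y : ℝ} (hy : 0 ≤ y) : Wfun w y = ∫ s in 0..y, w s := by
    rw [intervalIntegral.integral_of_le hy, integral_Ioc_eq_integral_Ioo, Wfun]
  have intervalIntegrable {y z : ℝ} (hy : 0 ≤ y) (hyz : y ≤ z) (hz : z ≤ x) :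
      IntervalIntegrable w volume y z :=
    (intervalIntegrable_iff_integrableOn_Ioo_of_le hyz).2 (hint.mono_set (Ioo_subset_Ioo hy hz))
  intro y hy z hz hyz
  rw [eq_intervalIntegral hy.1, eq_intervalIntegral hz.1, ← sub_pos,
    intervalIntegral.integral_interval_sub_left (intervalIntegrable le_rfl hz.1 hz.2)
      (intervalIntegrable le_rfl hy.1 hy.2)]
  exact intervalIntegral.intervalIntegral_pos_of_pos_on (intervalIntegrable hy.1 hyz.le hz.2)
    (fun s hs ↦ hpos s ⟨hy.1.trans_lt hs.1, hs.2.trans_le hz.2⟩) hyz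

lemma image_Wfun_Ioo (hx : 0 ≤ x) (hpos : ∀ s ∈ Ioo 0 x, 0 < w s)
    (hint : IntegrableOn w (Ioo 0 x)) : Wfun w '' Ioo 0 x = Ioo 0 (Wfun w x) := by
  rw [(continuousOn_Wfun hint).image_Ioo_of_strictMonoOn hx (strictMonoOn_Wfun hpos hint),
    Wfun_zero]

lemma measurableEmbedding_domRestrict_Wfun (hpos : ∀ s ∈ Ioo 0 x, 0 < w s)
    (hint : IntegrableOn w (Ioo 0 x)) :
    MeasurableEmbedding ((Ioc 0 x).domRestrict (Wfun w)) :=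
  ((continuousOn_Wfun hint).mono Ioc_subset_Icc_self).measurableEmbedding measurableSet_Ioc
    ((strictMonoOn_Wfun hpos hint).injOn.mono Ioc_subset_Icc_self)

lemma exists_Ioc_inter_preimage_Wfun_Iic (hx : 0 ≤ x) (hpos : ∀ s ∈ Ioo 0 x, 0 < w s)
    (hint : IntegrableOn w (Ioo 0 x)) (c : ℝ) :
    ∃ y ∈ Icc 0 x, Ioc 0 x ∩ Wfun w ⁻¹' Iic c = Ioc 0 y ∧
      Ioc 0 (Wfun w x) ∩ Iic c = Ioc 0 (Wfun w y) := by
  have hmono := strictMonoOn_Wfun hpos hint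
  have hWx : 0 ≤ Wfun w x := Wfun_zero w ▸ hmono.monotoneOn ⟨le_rfl, hx⟩ ⟨hx, le_rfl⟩ hx
  obtain ⟨y, hy, hWy⟩ : max 0 (min (Wfun w x) c) ∈ Wfun w '' Icc 0 x :=
    intermediate_value_Icc hx (continuousOn_Wfun hint)
      ⟨(Wfun_zero w).le.trans (le_max_left _ _), max_le hWx (min_le_left _ _)⟩
  have hle_iff {s : ℝ} (hs : s ∈ Ioc 0 x) : Wfun w s ≤ c ↔ s ≤ y := by
    have hmem : Wfun w s ∈ Ioc 0 (Wfun w x) := by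
      have himg := (continuousOn_Wfun hint).image_Ioc_of_strictMonoOn hx hmono
      exact (himg.trans (by rw [Wfun_zero])).subset (mem_image_of_mem _ hs)
    rw [← hmono.le_iff_le (Ioc_subset_Icc_self hs) hy, hWy, le_max_iff, le_min_iff]
    simp only [hmem.1.not_ge, hmem.2, false_or, true_and]
  refine ⟨y, hy, ?_, ?_⟩
  · ext s
    simp only [mem_inter_iff, mem_preimage, mem_Iic, mem_Ioc]
    grind
  · ext t
    simp only [hWy, mem_inter_iff, mem_Ioc, mem_Iic, le_max_iff, le_min_iff]
    grind

-- Transporting the measure from the subtype makes `Wfun w` a measurable embedding, so that the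
-- resulting change of variables needs no measurability of the integrand.
lemma map_domRestrict_Wfun (hx : 0 ≤ x) (hpos : ∀ s ∈ Ioo 0 x, 0 < w s)
    (hint : IntegrableOn w (Ioo 0 x)) :
    Measure.map ((Ioc 0 x).domRestrict (Wfun w))
      ((volume.withDensity fun s ↦ ENNReal.ofReal (w s)).comap (↑)) =
    volume.restrict (Ioc 0 (Wfun w x)) := by
  have hembed := measurableEmbedding_domRestrict_Wfun hpos hint
  symm
  refine Measure.ext_of_Iic _ _ fun c ↦ ?_
  obtain ⟨y, hy, hpre, himg⟩ := exists_Ioc_inter_preimage_Wfun_Iic hx hpos hint c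
  have hyx : Ioo 0 y ⊆ Ioo 0 x := Ioo_subset_Ioo_right hy.2
  calc volume.restrict (Ioc 0 (Wfun w x)) (Iic c)
    _ = ENNReal.ofReal (Wfun w y) := by
      rw [Measure.restrict_apply measurableSet_Iic, inter_comm, himg, Real.volume_Ioc, sub_zero]
    _ = ∫⁻ s in Ioc 0 y, ENNReal.ofReal (w s) := by
      rw [ofReal_Wfun (fun s hs ↦ (hpos s (hyx hs)).le) (hint.mono_set hyx),
        setLIntegral_congr Ioo_ae_eq_Ioc]
    _ = _ := by
      rw [hembed.map_apply, (MeasurableEmbedding.subtype_coe measurableSet_Ioc).comap_apply,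
        domRestrict_eq, preimage_comp, Subtype.image_preimage_coe, hpre,
        withDensity_apply _ measurableSet_Ioc]

lemma lintegral_Ioo_Wfun (hx : 0 ≤ x) (hpos : ∀ s ∈ Ioo 0 x, 0 < w s)
    (hint : IntegrableOn w (Ioo 0 x)) (g : ℝ → ℝ≥0∞) :
    ∫⁻ t in Ioo 0 (Wfun w x), g t = ∫⁻ s in Ioo 0 x, g (Wfun w s) * ENNReal.ofReal (w s) := by
  have hmeas : AEMeasurable (fun s ↦ ENNReal.ofReal (w s)) (volume.restrict (Ioc 0 x)) := by
    rw [← restrict_Ioo_eq_restrict_Ioc]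
    exact hint.aemeasurable.ennreal_ofReal
  simp only [restrict_Ioo_eq_restrict_Ioc]
  calc ∫⁻ t in Ioc 0 (Wfun w x), g t
    _ = ∫⁻ s in Ioc 0 x, g (Wfun w s) ∂volume.withDensity fun s ↦ ENNReal.ofReal (w s) := by
      rw [← map_domRestrict_Wfun hx hpos hint,
        (measurableEmbedding_domRestrict_Wfun hpos hint).lintegral_map]
      exact lintegral_subtype_comap measurableSet_Ioc fun s ↦ g (Wfun w s)
    _ = ∫⁻ s in Ioc 0 x, g (Wfun w s) * ENNReal.ofReal (w s) := by
      rw [restrict_withDensity measurableSet_Ioc,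
        lintegral_withDensity_eq_lintegral_mul_non_measurable₀ _ hmeas (by simp)]
      simp only [Pi.mul_apply, mul_comm]

end Primitive

section Weight

variable {a : ℝ≥0∞} {w : ℝ → ℝ}

lemma strictMonoOn_Wfun_Iset (hpos : ∀ x ∈ Iset a, 0 < w x)
    (hloc : ∀ x ∈ Iset a, IntegrableOn w (Ioo 0 x)) : StrictMonoOn (Wfun w) (Iset a) :=
  fun _ hx _ hy hxy ↦
    strictMonoOn_Wfun (fun s hs ↦ hpos s (Ioo_subset_Iset hy hs)) (hloc _ hy)
      ⟨hx.1.le, hxy.le⟩ ⟨hy.1.le, le_rfl⟩ hxy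

lemma image_Wfun_Iset (hpos : ∀ x ∈ Iset a, 0 < w x)
    (hloc : ∀ x ∈ Iset a, IntegrableOn w (Ioo 0 x)) : Wfun w '' Iset a = Iset (bval a w) := by
  have hpos' {x : ℝ} (hx : x ∈ Iset a) : ∀ s ∈ Ioo 0 x, 0 < w s :=
    fun s hs ↦ hpos s (Ioo_subset_Iset hx hs)
  have hbval : bval a w = ⨆ x ∈ Iset a, ENNReal.ofReal (Wfun w x) :=
    (setLIntegral_Iset_eq_iSup a _).trans <| biSup_congr fun x hx ↦
      (ofReal_Wfun (fun s hs ↦ (hpos' hx s hs).le) (hloc x hx)).symm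
  calc Wfun w '' Iset a
    _ = ⋃ x ∈ Iset a, Wfun w '' Ioo 0 x := by
      conv_lhs => rw [Iset_eq_biUnion_Ioo a, image_iUnion₂]
    _ = ⋃ x ∈ Iset a, Ioo 0 (Wfun w x) :=
      iUnion₂_congr fun x hx ↦ image_Wfun_Ioo hx.1.le (hpos' hx) (hloc x hx)
    _ = Iset (bval a w) := by
      ext t
      simp only [hbval, Iset, mem_iUnion₂, mem_Ioo, mem_ofPred_eq, lt_iSup_iff]
      grind [ENNReal.ofReal_lt_ofReal_iff']

lemma lintegral_comp_invFunOn_Wfun (hpos : ∀ x ∈ Iset a, 0 < w x)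
    (hloc : ∀ x ∈ Iset a, IntegrableOn w (Ioo 0 x)) (g : ℝ → ℝ≥0∞) {x : ℝ} (hx : x ∈ Iset a) :
    ∫⁻ t in Ioo 0 (Wfun w x), g (Function.invFunOn (Wfun w) (Iset a) t) =
      ∫⁻ s in Ioo 0 x, g s * ENNReal.ofReal (w s) := by
  have hsub := Ioo_subset_Iset hx
  rw [lintegral_Ioo_Wfun hx.1.le (fun s hs ↦ hpos s (hsub hs)) (hloc x hx)]
  refine setLIntegral_congr_fun measurableSet_Ioo fun s hs ↦ ?_
  rw [(strictMonoOn_Wfun_Iset hpos hloc).injOn.leftInvOn_invFunOn (hsub hs)]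

end Weight

theorem stmt_14_general {a : ℝ≥0∞} {w : ℝ → ℝ} (hpos : ∀ x ∈ Iset a, 0 < w x)
    (hloc : ∀ x ∈ Iset a, IntegrableOn w (Ioo 0 x)) (g φ : ℝ → ℝ≥0∞) :
    ⨆ t ∈ Iset (bval a w),
      (∫⁻ s in Ioo 0 t, g (Function.invFunOn (Wfun w) (Iset a) s)) / φ t =
    ⨆ x ∈ Iset a, (∫⁻ s in Ioo 0 x, g s * ENNReal.ofReal (w s)) / φ (Wfun w x) := by
  rw [← image_Wfun_Iset hpos hloc, iSup_image]
  exact biSup_congr fun x hx ↦ by rw [lintegral_comp_invFunOn_Wfun hpos hloc g hx]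

/-- For non-increasing positive locally integrable weights `w₁` on `I₁=(0,a₁)` and
`w₂` on `I₂=(0,W₁(a₁))`, and any measurable `f` on `I₁`,
`sup_{t∈I₂} (1/W₂(t))∫₀ᵗ (f*∘W₁⁻¹) = sup_{x∈I₁} (1/(W₂∘W₁)(x))∫₀ˣ f* w₁`; in particular
`f ∈ Λ_{M_{W₂},w₁}` iff the right-hand supremum is finite, and it is the norm of `f`. -/
theorem stmt_14 (a₁ : ℝ≥0∞) (ha₁ : 0 < a₁) (w₁ w₂ : ℝ → ℝ)
    (h₁pos : ∀ x ∈ Iset a₁, 0 < w₁ x) (h₁anti : AntitoneOn w₁ (Iset a₁))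
    (h₁meas : Measurable w₁)
    (h₁loc : ∀ x ∈ Iset a₁, IntegrableOn w₁ (Set.Ioo 0 x))
    (h₂pos : ∀ t ∈ Iset (bval a₁ w₁), 0 < w₂ t)
    (h₂anti : AntitoneOn w₂ (Iset (bval a₁ w₁)))
    (h₂meas : Measurable w₂)
    (h₂loc : ∀ t ∈ Iset (bval a₁ w₁), IntegrableOn w₂ (Set.Ioo 0 t))
    (f : ℝ → ℝ) (hf : Measurable f) :
    marcSup₁ a₁ w₁ w₂ f = marcSup₂ a₁ w₁ w₂ f ∧
    (marcSup₁ a₁ w₁ w₂ f ≠ ∞ ↔ marcSup₂ a₁ w₁ w₂ f ≠ ∞) := by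
  have hsup : marcSup₁ a₁ w₁ w₂ f = marcSup₂ a₁ w₁ w₂ f :=
    stmt_14_general h₁pos h₁loc (rearr (volI a₁) f) fun t ↦ ENNReal.ofReal (Wfun w₂ t)
  exact ⟨hsup, by rw [hsup]⟩
end
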